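/- arXiv:2501.02563 — 7 statements merged into one kernel-verified Lean document; each statement's English description precedes it below -/
import Mathlib

section
/- Let a and b be non-negative integers with a + b ≥ 1. Then the third largest adjacency eigenvalue of the graph H_{a,b} satisfies λ₃(H_{a,b}) = a + b − 1, i.e. λ₃(H_{a,b}) = |V(H_{a,b})|/3 − 1. -/
/-!
The matrix `A + 1`, with `A` the adjacency matrix of `H_{a,b}`, is constant on blocks: it factors
as `P * Q` through the six blocks, where `P` is the vertex–block incidence matrix. Hence, up to
powers of `X`, its characteristic polynomial is that of the `6 × 6` quotient matrix `Q * P`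
(`Matrix.charpoly_mul_comm'`), which is
`X ^ 2 * (X - (a + b)) ^ 2 * (X ^ 2 - (a + b) * X - 3 * a * b)` (`charpoly_habQ_mul_habP`).
The quadratic factor has one root `≥ a + b` and one root `≤ 0`, so the positive
eigenvalues of `A + 1` are exactly `r, a + b, a + b` with `r ≥ a + b`. Shifting by `1` gives the
three largest eigenvalues of `A`.
-/

open Matrix

/-- The list of eigenvalues of a real symmetric matrix, sorted in decreasing order. -/
noncomputable def eigsDesc {V : Type} [Fintype V] [DecidableEq V] (A : Matrix V V ℝ) : List ℝ :=
  if h : A.IsHermitian then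
    ((Finset.univ : Finset V).val.map h.eigenvalues).sort (· ≥ ·)
  else []

/-- The `k`-th largest eigenvalue (1-indexed, counted with multiplicity) of a real
symmetric matrix. -/
noncomputable def lambdaK {V : Type} [Fintype V] [DecidableEq V] (A : Matrix V V ℝ) (k : ℕ) : ℝ :=
  (eigsDesc A).getD (k - 1) 0

/-- `graphLambda G k` is the `k`-th largest adjacency eigenvalue of the graph `G`. -/
noncomputable def graphLambda {V : Type} [Fintype V] [DecidableEq V] (G : SimpleGraph V)
    (k : ℕ) : ℝ :=
  letI := Classical.decRel G.Adj
  lambdaK (G.adjMatrix ℝ) k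

/-- The vertex set of `H_{a,b}`: six blocks of sizes `a, b, a, b, a, b`. -/
abbrev HabV (a b : ℕ) : Type := Σ i : Fin 6, Fin (if i.val % 2 = 0 then a else b)

/-- The graph `H_{a,b}`: two distinct vertices are adjacent iff they lie in the same block or
in cyclically consecutive blocks. -/
def Hab (a b : ℕ) : SimpleGraph (HabV a b) :=
  SimpleGraph.fromRel (fun u v => u.1 = v.1 ∨ u.1 + 1 = v.1)

open Polynomial

/-- The incidence matrix between the vertices and the six blocks of `H_{a,b}`. -/
def habP (a b : ℕ) : Matrix (HabV a b) (Fin 6) ℝ :=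
  fun v i => if v.1 = i then 1 else 0

/-- The block–vertex matrix with entry `1` when the block equals, or is cyclically consecutive to,
the block of the vertex. -/
def habQ (a b : ℕ) : Matrix (Fin 6) (HabV a b) ℝ :=
  fun i v => if i = v.1 ∨ i + 1 = v.1 ∨ v.1 + 1 = i then 1 else 0

/-- The characteristic determinant of the quotient matrix, over any commutative ring. -/
theorem det_quotient {R : Type*} [CommRing R] (x a b : R) :
    !![x - a, -b, 0, 0, 0, -b;
       -a, x - b, -a, 0, 0, 0;
       0, -b, x - a, -b, 0, 0;
       0, 0, -a, x - b, -a, 0;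
       0, 0, 0, -b, x - a, -b;
       -a, 0, 0, 0, -a, x - b].det =
      x ^ 2 * (x - (a + b)) ^ 2 * (x ^ 2 - (a + b) * x - 3 * a * b) := by
  simp [det_succ_row_zero, Fin.sum_univ_succ, Fin.succAbove]
  ring

theorem habQ_mul_habP (a b : ℕ) :
    habQ a b * habP a b =
      !![(a : ℝ), b, 0, 0, 0, b;
         a, b, a, 0, 0, 0;
         0, b, a, b, 0, 0;
         0, 0, a, b, a, 0;
         0, 0, 0, b, a, b;
         a, 0, 0, 0, a, b] := by
  have key : ∀ i j, (habQ a b * habP a b) i j =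
      ((if j.val % 2 = 0 then a else b : ℕ) : ℝ) *
        (if i = j ∨ i + 1 = j ∨ j + 1 = i then 1 else 0) := by
    intro i j
    rw [Matrix.mul_apply, Fintype.sum_sigma, Finset.sum_eq_single j]
    · by_cases h : i = j ∨ i + 1 = j ∨ j + 1 = i <;> simp [habQ, habP, h]
    · intro k _ hk
      simp [habP, hk]
    · simp
  ext i j
  rw [key]
  fin_cases i <;> fin_cases j <;> simp

theorem charpoly_habQ_mul_habP (a b : ℕ) :
    (habQ a b * habP a b).charpoly =
      X ^ 2 * (X - C (a + b : ℝ)) ^ 2 * (X ^ 2 - C (a + b : ℝ) * X - C (3 * a * b : ℝ)) := by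
  have h := det_quotient (X : ℝ[X]) (C (a : ℝ)) (C (b : ℝ))
  rw [habQ_mul_habP, Matrix.charpoly]
  convert h using 2
  · ext1 i j
    fin_cases i <;> fin_cases j <;> simp [charmatrix]
  · simp only [C_add]
  · simp only [C_add, C_mul, map_ofNat]

theorem adjMatrix_Hab (a b : ℕ) [DecidableRel (Hab a b).Adj] :
    (Hab a b).adjMatrix ℝ = habP a b * habQ a b - scalar (HabV a b) 1 := by
  ext u v
  have h : (habP a b * habQ a b) u v =
      if u.1 = v.1 ∨ u.1 + 1 = v.1 ∨ v.1 + 1 = u.1 then 1 else 0 := by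
    rw [Matrix.mul_apply, Finset.sum_eq_single u.1]
    · simp [habP, habQ]
    · intro k _ hk
      simp [habP, hk.symm]
    · simp
  rw [Matrix.sub_apply, h, SimpleGraph.adjMatrix_apply]
  by_cases huv : u = v
  · subst huv
    simp [Hab]
  · have : (Hab a b).Adj u v ↔ (u.1 = v.1 ∨ u.1 + 1 = v.1 ∨ v.1 + 1 = u.1) := by
      simp only [Hab, SimpleGraph.fromRel_adj]
      constructor
      · rintro ⟨-, (h | h) | (h | h)⟩ <;> simp [h]
      · rintro (h | h | h) <;> simp [h, huv]
    simp [this, huv]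

/-- The roots of the characteristic polynomial exceeding `-1`: the threshold separates the three
leading eigenvalues from the rest. -/
theorem filter_roots_Hab (a b : ℕ) (hab : 1 ≤ a + b) [DecidableRel (Hab a b).Adj] :
    ∃ r : ℝ, (a + b : ℝ) - 1 ≤ r ∧
      ((Hab a b).adjMatrix ℝ).charpoly.roots.filter (fun x => -1 < x) =
        {r, (a + b : ℝ) - 1, (a + b : ℝ) - 1} := by
  set s : ℝ := a + b with hs
  have hs1 : 1 ≤ s := by rw [hs]; exact_mod_cast hab
  have hp : (0 : ℝ) ≤ 3 * a * b := by positivity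
  set p : ℝ := 3 * a * b with hpdef
  set d : ℝ := √(s ^ 2 + 4 * p) with hd
  have hd2 : d * d = s ^ 2 + 4 * p := Real.mul_self_sqrt (by positivity)
  have hd0 : 0 ≤ d := Real.sqrt_nonneg _
  have hds : s ≤ d := by nlinarith
  -- `(s + d) / 2` and `(s - d) / 2` are the roots of the quadratic factor `X ^ 2 - s X - p`.
  have hquad : (X ^ 2 - C s * X - C p : ℝ[X]) =
      (X - C ((s + d) / 2)) * (X - C ((s - d) / 2)) := by
    have h1 : s = (s + d) / 2 + (s - d) / 2 := by ring
    have h2 : p = -((s + d) / 2 * ((s - d) / 2)) := by linarith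
    have e1 : (C s : ℝ[X]) = C ((s + d) / 2) + C ((s - d) / 2) := by
      rw [← C_add]
      exact congrArg C h1
    have e2 : (C p : ℝ[X]) = -(C ((s + d) / 2) * C ((s - d) / 2)) := by
      rw [← C_mul, ← C_neg]
      exact congrArg C h2
    linear_combination (-X : ℝ[X]) * e1 - e2
  have hcomm := charpoly_mul_comm' (habP a b) (habQ a b)
  have hchar := charpoly_habQ_mul_habP a b
  rw [← hs, ← hpdef, hquad] at hchar
  replace hcomm := hcomm.trans (congrArg (X ^ Fintype.card (HabV a b) * ·) hchar)
  have hcomp := congrArg (fun q : ℝ[X] => q.comp (X + C 1)) hcomm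
  have hshift : ∀ t : ℝ, (X + C 1 - C t : ℝ[X]) = X - C (t - 1) := by
    intro t
    rw [C_sub]
    ring
  have hX : (X + C 1 : ℝ[X]) = X - C (-1) := by simp
  simp only [mul_comp, pow_comp, X_comp, sub_comp, C_comp, ← charpoly_sub_scalar,
    ← adjMatrix_Hab, hshift] at hcomp
  rw [hX] at hcomp
  have hA0 : ((Hab a b).adjMatrix ℝ).charpoly ≠ 0 := (charpoly_monic _).ne_zero
  have hroots := congrArg Polynomial.roots hcomp
  have hl : ∀ t : ℝ, (X - C t : ℝ[X]) ≠ 0 := X_sub_C_ne_zero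
  rw [roots_mul (by simp only [ne_eq, mul_eq_zero, pow_eq_zero_iff', hl, hA0]; simp),
    roots_mul (by simp only [ne_eq, mul_eq_zero, pow_eq_zero_iff', hl]; simp),
    roots_mul (by simp only [ne_eq, mul_eq_zero, pow_eq_zero_iff', hl]; simp),
    roots_mul (by simp only [ne_eq, mul_eq_zero, pow_eq_zero_iff', hl]; simp),
    roots_mul (by simp only [ne_eq, mul_eq_zero, pow_eq_zero_iff', hl]; simp)] at hroots
  simp only [roots_pow, roots_X_sub_C] at hroots
  have hf := congrArg (Multiset.filter (fun x : ℝ => -1 < x)) hroots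
  have f1 : Multiset.filter (fun x : ℝ => -1 < x) {-1} = 0 := by simp
  have f2 : Multiset.filter (fun x : ℝ => -1 < x) {s - 1} = {s - 1} := by
    rw [Multiset.filter_eq_self]; simp; linarith
  have f3 : Multiset.filter (fun x : ℝ => -1 < x) {(s + d) / 2 - 1} = {(s + d) / 2 - 1} := by
    rw [Multiset.filter_eq_self]; simp; linarith
  have f4 : Multiset.filter (fun x : ℝ => -1 < x) {(s - d) / 2 - 1} = 0 := by
    rw [Multiset.filter_eq_nil]; simp; linarith
  simp only [Multiset.filter_add, Multiset.filter_nsmul, f1, f2, f3, f4, smul_zero,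
    zero_add, add_zero] at hf
  refine ⟨(s + d) / 2 - 1, by linarith, ?_⟩
  rw [hf, two_nsmul, add_comm]
  rfl

/-- If the entries above a threshold `t` are `r ≥ s` and `s` twice, then `s` comes third
in decreasing order. -/
theorem sort_getD_two {m : Multiset ℝ} {t r s : ℝ} (hrs : s ≤ r)
    (h : m.filter (fun x => t < x) = {r, s, s}) :
    (m.sort (· ≥ ·)).getD 2 0 = s := by
  have hts : t < s := by
    have : s ∈ m.filter (fun x => t < x) := by rw [h]; simp
    exact (Multiset.mem_filter.1 this).2
  have hm : m = r ::ₘ s ::ₘ s ::ₘ m.filter (fun x => ¬ t < x) := by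
    conv_lhs => rw [← Multiset.filter_add_not (fun x => t < x) m, h]
    simp [Multiset.insert_eq_cons, Multiset.cons_add]
  have hle : ∀ x ∈ m.filter (fun x => ¬ t < x), x ≤ s := by
    intro x hx
    linarith [not_lt.1 (Multiset.mem_filter.1 hx).2]
  generalize m.filter (fun x => ¬ t < x) = l at hm hle
  rw [hm, Multiset.sort_cons, Multiset.sort_cons, Multiset.sort_cons]
  · rfl
  · exact hle
  · simpa using hle
  · simpa [hrs] using fun x hx => (hle x hx).trans hrs

theorem card_HabV (a b : ℕ) : Fintype.card (HabV a b) = 3 * (a + b) := by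
  simp [Fin.sum_univ_succ]
  ring

theorem stmt_0 (a b : ℕ) (hab : 1 ≤ a + b) :
    graphLambda (Hab a b) 3 = (a + b : ℝ) - 1 ∧
    graphLambda (Hab a b) 3 = (Fintype.card (HabV a b) : ℝ) / 3 - 1 := by
  have main : graphLambda (Hab a b) 3 = (a + b : ℝ) - 1 := by
    let := Classical.decRel (Hab a b).Adj
    have hH : ((Hab a b).adjMatrix ℝ).IsHermitian := by
      rw [Matrix.IsHermitian, conjTranspose_eq_transpose_of_trivial,
        SimpleGraph.transpose_adjMatrix]
    obtain ⟨r, hr, hfil⟩ := filter_roots_Hab a b hab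
    have hroots : ((Hab a b).adjMatrix ℝ).charpoly.roots =
        Finset.univ.val.map hH.eigenvalues := by
      rw [hH.roots_charpoly_eq_eigenvalues]
      rfl
    rw [hroots] at hfil
    change (eigsDesc ((Hab a b).adjMatrix ℝ)).getD 2 0 = _
    rw [eigsDesc, dif_pos hH]
    exact sort_getD_two hr hfil
  refine ⟨main, ?_⟩
  rw [main, card_HabV]
  push_cast
  ring
end

section
/- Let G be a strongly regular graph with parameters (n, r, e, f) where n ≥ 3. Then λ₃(G) < n/3. -/
/-!
Let `A` be the adjacency matrix and `q(x) = x² - (e - f) x - (r - f)`, so that `q(A) = f J`. One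
eigenvalue of `A` is `r` and all the others are roots of `q` (`srg_spectrum`); moreover `∑ λᵢ = 0`
and `∑ λᵢ² = n r`.

Suppose `λ₃ ≥ n/3`, so that besides `r` at least two eigenvalues are `≥ n/3`. A third one is
impossible: it would give `n r ≥ r² + 3 (n/3)²`, whereas `r (n - r) ≤ n²/4`. Hence the spectrum is
`r, θ, θ, τ, …, τ` with `θ ≥ n/3 > τ` the two roots of `q` (for `n = 3` there is no `τ`, and the
trace is positive).

It remains to exclude this spectrum (`no_double_theta`). For `n = 5` the two power sums already
conflict. For `n ≠ 5`, `θ + τ = e - f` and `r + 2θ + (n - 3)τ = 0` make `τ` rational, hence an integer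
(`int_of_quadratic`), and negative. If `τ = -1` then `r + 2θ = n - 3`, although `r, θ ≥ n/3`. If
`τ ≤ -2` then `r + 2θ ≥ 2 (n - 3)` and `(r - n/2)² + 2θ² ≤ (n - 4)(n - 12)/4`, which is impossible
for small `n` by sign and for large `n` by Cauchy–Schwarz.
-/

open Matrix

open Finset in
/-- If the third entry of the decreasing list of eigenvalues is at least `c`, then at least three
indices carry an eigenvalue `≥ c`. -/
lemma three_le_card_of_le_lambdaK {V : Type} [Fintype V] [DecidableEq V] {A : Matrix V V ℝ}
    (hA : A.IsHermitian) (hV : 3 ≤ Fintype.card V) {c : ℝ} (h : c ≤ lambdaK A 3) :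
    3 ≤ #{i | c ≤ hA.eigenvalues i} := by
  unfold lambdaK eigsDesc at h
  rw [dif_pos hA] at h
  have hp := Multiset.pairwise_sort ((univ : Finset V).val.map hA.eigenvalues) (· ≥ ·)
  have he := Multiset.sort_eq ((univ : Finset V).val.map hA.eigenvalues) (· ≥ ·)
  have hlen : (((univ : Finset V).val.map hA.eigenvalues).sort (· ≥ ·)).length
      = Fintype.card V := by
    rw [← Multiset.coe_card, he]; simp
  have hcard : #{i | c ≤ hA.eigenvalues i} =
      (((univ : Finset V).val.map hA.eigenvalues).sort (· ≥ ·)).countP (c ≤ ·) := by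
    rw [← Multiset.coe_countP, he, Multiset.countP_map]
    rfl
  rw [hcard]
  generalize ((univ : Finset V).val.map hA.eigenvalues).sort (· ≥ ·) = l at *
  match l with
  | [] => simp at hlen; omega
  | [_] => simp at hlen; omega
  | [_, _] => simp at hlen; omega
  | x :: y :: z :: t =>
    simp only [List.pairwise_cons, List.mem_cons] at hp
    have hz : c ≤ z := by simpa using h
    have hx : c ≤ x := hz.trans (hp.1 z (by simp))
    have hy : c ≤ y := hz.trans (hp.2.1 z (by simp))
    simp [hx, hy, hz]

lemma sum_eigenvalues_sq {V : Type} [Fintype V] [DecidableEq V] {A : Matrix V V ℝ}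
    (hA : A.IsHermitian) : ∑ i, hA.eigenvalues i ^ 2 = (A * A).trace := by
  conv_rhs => rw [hA.spectral_theorem]
  rw [← map_mul, Unitary.conjStarAlgAut_apply, Matrix.trace_mul_cycle]
  simp [Matrix.trace, sq]

/-- The quadratic relation `A² = (e - f) A + (r - f) I + f J` for a strongly regular graph. -/
lemma adjMatrix_mul_self_of_srg {V : Type} [Fintype V] [DecidableEq V] {G : SimpleGraph V}
    [DecidableRel G.Adj] {n r e f : ℕ} (h : G.IsSRGWith n r e f) :
    G.adjMatrix ℝ * G.adjMatrix ℝ = ((e : ℝ) - f) • G.adjMatrix ℝ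
      + ((r : ℝ) - f) • (1 : Matrix V V ℝ) + (f : ℝ) • Matrix.of (fun _ _ ↦ 1) := by
  rw [← sq, h.matrix_eq]
  simp only [← Nat.cast_smul_eq_nsmul ℝ]
  ext v w
  by_cases hvw : v = w
  · subst hvw; simp
  · by_cases ha : G.Adj v w <;> simp [hvw, ha]

/-- The spectral data used below: one index `i₀` carries the eigenvalue `r`, every other eigenvalue
is a root of `x² - (e - f) x - (r - f)`, and the first two power sums are `0` and `n r`.

If `q` is this quadratic, then `q(A) = f J` is positive semidefinite, so each `q(λᵢ)` is nonnegative;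
since `∑ q(λᵢ) = tr (f J) = n f = q(r)`, all terms other than the one at `i₀` vanish. -/
lemma srg_spectrum {V : Type} [Fintype V] [DecidableEq V] {G : SimpleGraph V}
    [DecidableRel G.Adj] {n r e f : ℕ} (h : G.IsSRGWith n r e f) (hn : 0 < n)
    (hA : (G.adjMatrix ℝ).IsHermitian) :
    ∑ i, hA.eigenvalues i = 0 ∧ ∑ i, hA.eigenvalues i ^ 2 = (n : ℝ) * r ∧
    ∃ i₀, hA.eigenvalues i₀ = r ∧ ∀ i, i ≠ i₀ →
      hA.eigenvalues i ^ 2 - ((e : ℝ) - f) * hA.eigenvalues i - ((r : ℝ) - f) = 0 := by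
  have hM := adjMatrix_mul_self_of_srg h
  have hcard : (Fintype.card V : ℝ) = n := by rw [h.card]
  obtain ⟨v₀⟩ : Nonempty V := Fintype.card_pos_iff.1 (h.card ▸ hn)
  have hs1 : ∑ i, hA.eigenvalues i = 0 := by
    have := hA.trace_eq_sum_eigenvalues
    simpa using this.symm
  have hs2 : ∑ i, hA.eigenvalues i ^ 2 = (n : ℝ) * r := by
    rw [sum_eigenvalues_sq]
    simp only [Matrix.trace, Matrix.diag, SimpleGraph.adjMatrix_mul_self_apply_self,
      h.regular.degree_eq]
    simp [hcard]
  have hone : G.adjMatrix ℝ *ᵥ (fun _ ↦ (1 : ℝ)) = (r : ℝ) • (fun _ ↦ (1 : ℝ)) := by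
    ext v
    simp [SimpleGraph.adjMatrix_mulVec_apply, h.regular.degree_eq]
  have hqr : (r : ℝ) ^ 2 - ((e : ℝ) - f) * r - ((r : ℝ) - f) = n * f := by
    have h1 := congrArg (fun M ↦ (M *ᵥ (fun _ ↦ (1 : ℝ))) v₀) hM
    simp only [← Matrix.mulVec_mulVec, Matrix.add_mulVec, Matrix.smul_mulVec, hone,
      Matrix.mulVec_smul, Matrix.one_mulVec] at h1
    simp [Matrix.mulVec, dotProduct, hcard] at h1
    linarith
  have hmem : (r : ℝ) ∈ Set.range hA.eigenvalues := by
    rw [← hA.spectrum_real_eq_range_eigenvalues, ← Matrix.spectrum_toLin']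
    apply Module.End.HasEigenvalue.mem_spectrum
    apply Module.End.hasEigenvalue_of_hasEigenvector (x := fun _ ↦ (1 : ℝ))
    refine ⟨Module.End.mem_eigenspace_iff.2 (by simpa using hone), fun h0 ↦ ?_⟩
    simpa using congrFun h0 v₀
  obtain ⟨i₀, hi₀⟩ := hmem
  refine ⟨hs1, hs2, i₀, hi₀, ?_⟩
  have hq0 : ∀ i, 0 ≤ hA.eigenvalues i ^ 2 - ((e : ℝ) - f) * hA.eigenvalues i
      - ((r : ℝ) - f) := by
    intro i
    have hv := hA.mulVec_eigenvectorBasis i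
    have hne : (hA.eigenvectorBasis i).ofLp ≠ 0 :=
      (WithLp.ofLp_eq_zero 2).ne.2 <| hA.eigenvectorBasis.orthonormal.ne_zero i
    generalize (hA.eigenvectorBasis i).ofLp = v at *
    have hpos : 0 < v ⬝ᵥ v := by
      simpa using (Matrix.dotProduct_star_self_pos_iff (v := v)).2 hne
    have hJ : v ⬝ᵥ ((Matrix.of fun _ _ ↦ (1 : ℝ) : Matrix V V ℝ) *ᵥ v) = (∑ x, v x) ^ 2 := by
      simp [Matrix.mulVec, dotProduct, sq, Finset.sum_mul]
    have h1 := congrArg (fun M ↦ v ⬝ᵥ (M *ᵥ v)) hM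
    simp only [← Matrix.mulVec_mulVec, Matrix.add_mulVec, Matrix.smul_mulVec, hv,
      Matrix.mulVec_smul, Matrix.one_mulVec, dotProduct_add, dotProduct_smul, hJ,
      smul_eq_mul] at h1
    have h2 : 0 ≤ (f : ℝ) * (∑ x, v x) ^ 2 := by positivity
    refine nonneg_of_mul_nonneg_left (b := v ⬝ᵥ v) ?_ hpos
    nlinarith
  have hsum : ∑ i, (hA.eigenvalues i ^ 2 - ((e : ℝ) - f) * hA.eigenvalues i
      - ((r : ℝ) - f)) = n * f := by
    simp only [Finset.sum_sub_distrib, ← Finset.mul_sum, hs1, hs2]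
    simp [hcard]
  rw [← Finset.add_sum_erase _ _ (Finset.mem_univ i₀), hi₀, hqr] at hsum
  have hz := (Finset.sum_eq_zero_iff_of_nonneg (fun i _ ↦ hq0 i)).1 (add_eq_left.1 hsum)
  exact fun i hi ↦ hz i (by simp [hi])

/-- A rational root of a monic integer quadratic is an integer, in the form needed here: an integer
multiple of `t` being an integer supplies rationality. -/
lemma int_of_quadratic {t : ℝ} {p q a b : ℤ} (ha : a ≠ 0) (hab : (a : ℝ) * t = b)
    (h : t ^ 2 - p * t - q = 0) : ∃ m : ℤ, t = m := by
  have ha' : (a : ℝ) ≠ 0 := by exact_mod_cast ha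
  have h1 : (b : ℝ) ^ 2 - p * a * b - q * a ^ 2 = 0 := by
    rw [← hab]; linear_combination (a : ℝ) ^ 2 * h
  have h2 : b ^ 2 - p * a * b - q * a ^ 2 = 0 := by exact_mod_cast h1
  -- The discriminant times `a²` is the square `(2b - pa)²`, so the discriminant is a square.
  have h3 : (2 * b - p * a) ^ 2 = a ^ 2 * (p ^ 2 + 4 * q) := by linear_combination 4 * h2
  obtain ⟨d, hd⟩ : a ∣ 2 * b - p * a :=
    (Int.pow_dvd_pow_iff two_ne_zero).1 (h3 ▸ Dvd.intro _ rfl)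
  have h4 : d ^ 2 = p ^ 2 + 4 * q := by
    rw [hd] at h3
    exact mul_left_cancel₀ (pow_ne_zero 2 ha) (by linarith)
  have h5 : Even (p + d) := by
    have : Even (d ^ 2 - p ^ 2) := ⟨2 * q, by linarith⟩
    simp only [Int.even_sub, Int.even_pow, Int.even_add] at *
    tauto
  obtain ⟨m, hm⟩ := h5
  refine ⟨m, ?_⟩
  have h6 : (2 * b : ℝ) - p * a = a * d := by exact_mod_cast hd
  have h7 : (p + d : ℝ) = m + m := by exact_mod_cast hm
  apply mul_left_cancel₀ ha'
  linear_combination hab + h6 / 2 + a * h7 / 2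

/-- No spectrum `r, θ, θ, τ, …, τ` (with `n - 3` copies of `τ`) with `θ ≥ n / 3` satisfies the trace
identities, when `θ + τ` is an integer and `τ` a root of a monic integer quadratic. -/
lemma no_double_theta {n r : ℕ} {p q : ℤ} {θ τ : ℝ} (hn : 4 ≤ n) (hθ : (n : ℝ) / 3 ≤ θ)
    (hadd : θ + τ = p) (hroot : τ ^ 2 - p * τ - q = 0)
    (hs1 : (r : ℝ) + 2 * θ + ((n : ℝ) - 3) * τ = 0)
    (hs2 : (r : ℝ) ^ 2 + 2 * θ ^ 2 + ((n : ℝ) - 3) * τ ^ 2 = n * r) : False := by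
  have hn' : (4 : ℝ) ≤ n := by exact_mod_cast hn
  have hr0 : (0 : ℝ) ≤ r := by positivity
  have hτ2 : 0 ≤ ((n : ℝ) - 3) * τ ^ 2 := mul_nonneg (by linarith) (sq_nonneg _)
  have hθ2 : (n : ℝ) ^ 2 / 9 ≤ θ ^ 2 := by nlinarith
  have hr : (n : ℝ) / 3 ≤ r := by
    by_contra! hlt
    nlinarith
  by_cases h5 : n = 5
  · subst h5
    have : τ = -(r + 2 * θ) / 2 := by push_cast at hs1; linarith
    rw [this] at hs2
    push_cast at *
    nlinarith
  obtain ⟨m, rfl⟩ : ∃ m : ℤ, τ = m := by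
    refine int_of_quadratic (a := (n : ℤ) - 5) (b := -r - 2 * p) (by omega) ?_ hroot
    push_cast
    linear_combination hs1 - 2 * hadd
  have hm : (m : ℝ) < 0 := by
    by_contra! hge
    nlinarith
  have hm0 : m < 0 := by exact_mod_cast hm
  obtain rfl | hm2 : m = -1 ∨ m ≤ -2 := by omega
  · push_cast at hs1
    linarith
  have hm2' : (m : ℝ) ≤ -2 := by exact_mod_cast hm2
  have hsum : 2 * ((n : ℝ) - 3) ≤ r + 2 * θ := by nlinarith
  have hsq : (4 : ℝ) * (n - 3) ≤ (n - 3) * m ^ 2 := by nlinarith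
  rcases Nat.lt_or_ge n 12 with h12 | h12
  · -- The trace identities bound `(r - n/2)² + 2θ²` by `(n - 4)(n - 12) / 4 ≤ 0`.
    have : (n : ℝ) ≤ 12 := by exact_mod_cast h12.le
    nlinarith [sq_nonneg ((r : ℝ) - n / 2)]
  · have : (12 : ℝ) ≤ n := by exact_mod_cast h12
    -- Cauchy–Schwarz for `(r - n/2) + 2θ`, against `(r - n/2)² + 2θ² ≤ n² / 4`.
    have hcs : ((r : ℝ) - n / 2 + 2 * θ) ^ 2 ≤ 3 * (n ^ 2 / 4) := by
      nlinarith [sq_nonneg ((r : ℝ) - n / 2 - θ)]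
    nlinarith

theorem stmt_1 {V : Type} [Fintype V] [DecidableEq V] (G : SimpleGraph V) [DecidableRel G.Adj]
    (n r e f : ℕ) (hsrg : G.IsSRGWith n r e f) (hn : 3 ≤ n) :
    graphLambda G 3 < (n : ℝ) / 3 := by
  by_contra! hlam
  have hA : (G.adjMatrix ℝ).IsHermitian := by
    rw [Matrix.IsHermitian, Matrix.conjTranspose_eq_transpose_of_trivial]
    exact G.isSymm_adjMatrix
  have hlam' : (n : ℝ) / 3 ≤ lambdaK (G.adjMatrix ℝ) 3 := by
    have hg : graphLambda G 3 = lambdaK (G.adjMatrix ℝ) 3 := by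
      unfold graphLambda
      congr!
    exact hg ▸ hlam
  have hS := three_le_card_of_le_lambdaK hA (hsrg.card ▸ hn) hlam'
  obtain ⟨hs1, hs2, i₀, hi₀, hq⟩ := srg_spectrum hsrg (by omega) hA
  have hcardV := hsrg.card
  have hn' : (3 : ℝ) ≤ n := by exact_mod_cast hn
  generalize hA.eigenvalues = ev at *
  have hS' : 2 ≤ (({i | (n : ℝ) / 3 ≤ ev i} : Finset V).erase i₀).card := by
    have := Finset.pred_card_le_card_erase (s := ({i | (n : ℝ) / 3 ≤ ev i} : Finset V)) (a := i₀)
    omega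
  obtain ⟨i₁, hi₁, i₂, hi₂, h12⟩ := Finset.one_lt_card.1 hS'
  simp only [Finset.mem_erase, Finset.mem_filter, Finset.mem_univ, true_and] at hi₁ hi₂
  obtain ⟨h10, hi₁⟩ := hi₁
  obtain ⟨h20, hi₂⟩ := hi₂
  -- `T` indexes the `n - 3` remaining eigenvalues.
  set T : Finset V := ((Finset.univ.erase i₀).erase i₁).erase i₂ with hT
  have hTcard : T.card = n - 3 := by
    rw [hT, Finset.card_erase_of_mem (by simp [h20, h12.symm]),
      Finset.card_erase_of_mem (by simp [h10]), Finset.card_erase_of_mem (by simp),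
      Finset.card_univ, hcardV]
    omega
  have hsplit : ∀ g : V → ℝ, ∑ i, g i = g i₀ + g i₁ + g i₂ + ∑ i ∈ T, g i := by
    intro g
    rw [← Finset.add_sum_erase _ _ (Finset.mem_univ i₀),
      ← Finset.add_sum_erase (Finset.univ.erase i₀) _ (a := i₁) (by simp [h10]),
      ← Finset.add_sum_erase ((Finset.univ.erase i₀).erase i₁) _ (a := i₂)
        (by simp [h20, h12.symm])]
    ring
  rw [hsplit, hi₀] at hs1 hs2
  -- A fourth eigenvalue `≥ n/3` would force `r² + 3 (n/3)² ≤ n r`, impossible for real `r`.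
  have hsmall : ∀ j ∈ T, ev j < (n : ℝ) / 3 := by
    intro j hj
    by_contra! hge
    have h1 : ev j ^ 2 ≤ ∑ i ∈ T, ev i ^ 2 :=
      Finset.single_le_sum (fun i _ ↦ sq_nonneg (ev i)) hj
    have hsq : ∀ x : ℝ, (n : ℝ) / 3 ≤ x → (n : ℝ) ^ 2 / 9 ≤ x ^ 2 := fun x hx ↦ by nlinarith
    nlinarith [hsq _ hi₁, hsq _ hi₂, hsq _ hge, sq_nonneg ((r : ℝ) - n / 2)]
  rcases hn.eq_or_lt with h3 | h4
  · have hT0 : T = ∅ := Finset.card_eq_zero.1 (by omega)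
    rw [hT0, Finset.sum_empty] at hs1
    have : (0 : ℝ) ≤ r := by positivity
    linarith
  obtain ⟨j, hj⟩ : T.Nonempty := Finset.card_pos.1 (by omega)
  have hT0 : ∀ i ∈ T, i ≠ i₀ := fun i hi ↦ by simp [hT] at hi; tauto
  have hjs := hsmall j hj
  have hadd : ev i₁ + ev j = (e : ℝ) - f := by
    have h0 : ev i₁ - ev j ≠ 0 := by linarith
    apply mul_left_cancel₀ h0
    linear_combination hq i₁ h10 - hq j (hT0 j hj)
  -- Any root of the quadratic is `ev i₁` or `ev j`.
  have hdich : ∀ i, i ≠ i₀ → ev i = ev i₁ ∨ ev i = ev j := by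
    intro i hi
    have : (ev i - ev i₁) * (ev i - ev j) = 0 := by
      linear_combination hq i hi - hq i₁ h10 + (ev i₁ - ev i) * hadd
    rcases mul_eq_zero.1 this with h | h
    · left; linarith
    · right; linarith
  have h21 : ev i₂ = ev i₁ := by
    rcases hdich i₂ h20 with h | h
    · exact h
    · linarith
  have hTj : ∀ i ∈ T, ev i = ev j := by
    intro i hi
    rcases hdich i (hT0 i hi) with h | h
    · have := hsmall i hi
      linarith
    · exact h
  have hTc : (T.card : ℝ) = n - 3 := by rw [hTcard]; push_cast [hn]; ring
  rw [Finset.sum_congr rfl hTj, Finset.sum_const, nsmul_eq_mul, hTc, h21] at hs1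
  rw [Finset.sum_congr rfl (fun i hi ↦ by rw [hTj i hi]), Finset.sum_const, nsmul_eq_mul,
    hTc, h21] at hs2
  refine no_double_theta (r := r) (p := (e : ℤ) - f) (q := (r : ℤ) - f) h4 hi₁
    (by push_cast; exact hadd) ?_ (by linarith) (by linarith)
  push_cast
  exact hq j (hT0 j hj)
end

section
/- Let G be an r-regular finite simple graph with at least 3 edges, and let L(G) denote its line graph. Then λ₃(L(G)) < |V(L(G))|/3, i.e. λ₃(L(G)) < |E(G)|/3. -/
/-!
Let `N` be the vertex-edge incidence matrix of `G` and `M` the adjacency matrix of the line graph,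
so that `NᵀN = M + 2` while `NNᵀ = A + r`, where `A` is the adjacency matrix of `G`. Write `n`, `m`
for the numbers of vertices and edges, so `2m = nr`, and let `ν` run over the eigenvalues of
`M + 2`. Comparing traces of `NᵀN` and `NNᵀ` gives `∑ ν = nr` and `∑ ν² = n(r² + r)`; at most `n` of
the `ν` are nonzero, because `rank N ≤ n`; and `2r` is one of them, with the constant eigenvector.

If `λ₃(L(G)) ≥ m/3`, then besides the eigenvalue `2r` there are two more `ν`'s that are at least
`m/3 + 2`. With `c = 2r/3`, summing `(ν - c)²` over the nonzero `ν` gives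
`(2r - c)² + 2(m/3 + 2 - c)² ≤ ∑ ν² - 2c ∑ ν + c² n = nr + nr²/9`,
and substituting `m = nr/2` turns this into a quadratic inequality in `n` and `r` that fails
whenever `r < n`.
-/

open Matrix

/-! ### Sorted families and shifted Hermitian matrices -/

/-- If the third entry of the decreasing rearrangement of a family is at least `t`, then three
members of the family are at least `t`. -/
lemma three_le_card_filter_of_sort {ι : Type*} [Fintype ι] (f : ι → ℝ) (t : ℝ)
    (hc : 3 ≤ Fintype.card ι)
    (ht : t ≤ (((Finset.univ : Finset ι).val.map f).sort (· ≥ ·)).getD 2 0) :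
    3 ≤ (Finset.univ.filter fun i => t ≤ f i).card := by
  have hp := Multiset.pairwise_sort ((Finset.univ : Finset ι).val.map f) (· ≥ ·)
  have he := Multiset.sort_eq ((Finset.univ : Finset ι).val.map f) (· ≥ ·)
  have hl := Multiset.length_sort (s := (Finset.univ : Finset ι).val.map f) (r := (· ≥ ·))
  have hcount : (Finset.univ.filter fun i => t ≤ f i).card
      = ((Finset.univ : Finset ι).val.map f).countP (t ≤ ·) := by
    rw [Multiset.countP_map]; rfl
  rw [hcount, ← he]
  generalize ((Finset.univ : Finset ι).val.map f).sort (· ≥ ·) = l at *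
  have hl' : l.length = Fintype.card ι := by simpa using hl
  match l, hl' with
  | [], h => simp at h; omega
  | [_], h => simp at h; omega
  | [_, _], h => simp at h; omega
  | a :: b :: c :: tl, _ =>
    simp at ht hp
    have hb : t ≤ b := ht.trans hp.2.1.1
    have ha : t ≤ a := hb.trans hp.1.1
    simp [ha, hb, ht]

section Shift

variable {ι : Type*} [Fintype ι] [DecidableEq ι] {A : Matrix ι ι ℝ} (hA : A.IsHermitian) (c : ℝ)

/-- A shift of a Hermitian matrix is diagonalized by the same eigenbasis. -/
lemma exists_diagonalization_add :
    ∃ U W : Matrix ι ι ℝ, U * W = 1 ∧ W * U = 1 ∧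
      A + c • (1 : Matrix ι ι ℝ) = U * diagonal (fun i => hA.eigenvalues i + c) * W := by
  refine ⟨hA.eigenvectorUnitary, star (hA.eigenvectorUnitary : Matrix ι ι ℝ),
    Unitary.coe_mul_star_self _, Unitary.coe_star_mul_self _, ?_⟩
  have h := hA.spectral_theorem
  rw [Unitary.conjStarAlgAut_apply] at h
  have hd : diagonal (fun i => hA.eigenvalues i + c)
      = diagonal (RCLike.ofReal ∘ hA.eigenvalues) + c • (1 : Matrix ι ι ℝ) := by
    rw [smul_one_eq_diagonal, diagonal_add]; rfl
  rw [hd, mul_add, add_mul, ← h, mul_smul_comm, smul_mul_assoc, mul_one]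
  congr 2
  exact (Unitary.coe_mul_star_self _).symm

lemma sum_eigenvalues_add :
    ∑ i, (hA.eigenvalues i + c) = (A + c • (1 : Matrix ι ι ℝ)).trace := by
  obtain ⟨U, W, -, hWU, h⟩ := exists_diagonalization_add hA c
  rw [h, trace_mul_comm, ← mul_assoc, hWU, one_mul, trace_diagonal]

lemma sum_eigenvalues_add_sq :
    ∑ i, (hA.eigenvalues i + c) ^ 2
      = ((A + c • (1 : Matrix ι ι ℝ)) * (A + c • (1 : Matrix ι ι ℝ))).trace := by
  obtain ⟨U, W, -, hWU, h⟩ := exists_diagonalization_add hA c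
  rw [h]
  generalize hD : diagonal (fun i => hA.eigenvalues i + c) = D
  have : U * D * W * (U * D * W) = U * (D * D) * W := by
    calc _ = U * D * (W * U) * D * W := by simp only [mul_assoc]
      _ = _ := by rw [hWU]; simp only [mul_assoc, mul_one]
  rw [this, trace_mul_comm, ← mul_assoc, hWU, one_mul, ← hD, diagonal_mul_diagonal,
    trace_diagonal]
  simp only [sq]

lemma card_eigenvalues_add_ne_zero :
    (Finset.univ.filter fun i => hA.eigenvalues i + c ≠ 0).card
      = (A + c • (1 : Matrix ι ι ℝ)).rank := by
  obtain ⟨U, W, hUW, hWU, h⟩ := exists_diagonalization_add hA c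
  have hU : IsUnit U.det := (Matrix.isUnit_iff_isUnit_det U).1 ⟨⟨U, W, hUW, hWU⟩, rfl⟩
  have hW : IsUnit W.det := (Matrix.isUnit_iff_isUnit_det W).1 ⟨⟨W, U, hWU, hUW⟩, rfl⟩
  rw [h, rank_mul_eq_left_of_isUnit_det _ _ hW, rank_mul_eq_right_of_isUnit_det _ _ hU,
    rank_diagonal, Fintype.card_subtype]

lemma exists_eigenvalue_add {v : ι → ℝ} (hv : v ≠ 0) {x : ℝ}
    (h : (A + c • (1 : Matrix ι ι ℝ)) *ᵥ v = x • v) : ∃ i, hA.eigenvalues i + c = x := by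
  have hAv : A *ᵥ v = (x - c) • v := by
    rw [add_mulVec, smul_mulVec, one_mulVec] at h
    rw [sub_smul, ← h, add_sub_cancel_right]
  have hx : x - c ∈ spectrum ℝ A := by
    rw [← Matrix.spectrum_toLin']
    apply Module.End.HasEigenvalue.mem_spectrum
    exact Module.End.hasEigenvalue_of_hasEigenvector (x := v)
      ⟨Module.End.mem_eigenspace_iff.2 (by simpa using hAv), hv⟩
  rw [hA.spectrum_real_eq_range_eigenvalues] at hx
  obtain ⟨i, hi⟩ := hx
  exact ⟨i, by rw [hi]; ring⟩

end Shift

/-! ### The incidence matrix and its two Gram matrices -/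

section Incidence

set_option linter.unusedSectionVars false

variable {V : Type*} [Fintype V] [DecidableEq V] (G : SimpleGraph V) [DecidableRel G.Adj]

/-- The vertex-edge incidence matrix, with columns indexed by the edges of `G` only. -/
def edgeInc : Matrix V G.edgeSet ℝ := of fun v e => if v ∈ (e : Sym2 V) then 1 else 0

lemma edgeInc_eq (v : V) (e : G.edgeSet) : edgeInc G v e = G.incMatrix ℝ v e := by
  simp [edgeInc, SimpleGraph.incMatrix_apply', SimpleGraph.incidenceSet]

lemma sum_edgeInc_col (e : G.edgeSet) : ∑ v, edgeInc G v e = 2 := by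
  simp only [edgeInc_eq]
  exact G.sum_incMatrix_apply_of_mem_edgeSet e.2

/-- Used to pass between `edgeInc` and `SimpleGraph.incMatrix`, whose columns are indexed by all of
`Sym2 V` and vanish outside the edge set. -/
lemma sum_edge_eq (f : Sym2 V → ℝ) (hf : ∀ e, e ∉ G.edgeSet → f e = 0) :
    ∑ e : G.edgeSet, f e = ∑ e, f e := by
  rw [← Finset.sum_subset (Finset.subset_univ G.edgeFinset)
    (fun e _ he => hf e (by simpa using he))]
  exact (Finset.sum_subtype G.edgeFinset (by simp) f).symm

lemma sum_edgeInc_row (v : V) : ∑ e, edgeInc G v e = G.degree v := by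
  simp only [edgeInc_eq]
  rw [sum_edge_eq G (fun e => G.incMatrix ℝ v e), G.sum_incMatrix_apply]
  exact fun e he => G.incMatrix_of_notMem_incidenceSet fun h => he h.1

lemma edgeInc_mul_transpose {r : ℕ} (hreg : G.IsRegularOfDegree r) :
    edgeInc G * (edgeInc G)ᵀ = G.adjMatrix ℝ + (r : ℝ) • (1 : Matrix V V ℝ) := by
  have h : edgeInc G * (edgeInc G)ᵀ = G.incMatrix ℝ * (G.incMatrix ℝ)ᵀ := by
    ext a b
    simp only [mul_apply, transpose_apply, edgeInc_eq]
    refine sum_edge_eq G (fun e => G.incMatrix ℝ a e * G.incMatrix ℝ b e) fun e he => ?_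
    rw [G.incMatrix_of_notMem_incidenceSet (a := a) fun h => he h.1, zero_mul]
  rw [h, G.incMatrix_mul_transpose]
  ext a b
  by_cases hab : a = b
  · subst hab
    simp [hreg.degree_eq a]
  · simp [hab]

lemma transpose_mul_edgeInc [DecidableRel G.lineGraph.Adj] :
    (edgeInc G)ᵀ * edgeInc G
      = G.lineGraph.adjMatrix ℝ + (2 : ℝ) • (1 : Matrix G.edgeSet G.edgeSet ℝ) := by
  ext e f
  by_cases hef : e = f
  · subst hef
    have : ∀ v, edgeInc G v e * edgeInc G v e = edgeInc G v e := by simp [edgeInc]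
    simp [mul_apply, this, sum_edgeInc_col]
  · have hl : ((edgeInc G)ᵀ * edgeInc G) e f
        = ((Finset.univ.filter fun v => v ∈ (e : Sym2 V) ∧ v ∈ (f : Sym2 V)).card : ℝ) := by
      simp [mul_apply, edgeInc, ← ite_and, and_comm]
    rw [hl]
    -- Two distinct edges have at most one common endpoint.
    have hle : (Finset.univ.filter fun v => v ∈ (e : Sym2 V) ∧ v ∈ (f : Sym2 V)).card ≤ 1 := by
      rw [Finset.card_le_one]
      intro a ha b hb
      simp only [Finset.mem_filter, Finset.mem_univ, true_and] at ha hb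
      by_contra hab
      exact hef (Subtype.ext (Sym2.eq_of_ne_mem hab ha.1 hb.1 ha.2 hb.2))
    simp only [Matrix.add_apply, SimpleGraph.adjMatrix_apply, Matrix.smul_apply,
      Matrix.one_apply_ne hef, smul_zero, add_zero]
    split_ifs with hadj
    · obtain ⟨-, v, hv⟩ := hadj
      have : 0 < (Finset.univ.filter fun v => v ∈ (e : Sym2 V) ∧ v ∈ (f : Sym2 V)).card :=
        Finset.card_pos.2 ⟨v, by simpa using hv⟩
      exact_mod_cast le_antisymm hle this
    · rw [Nat.cast_eq_zero, Finset.card_eq_zero, Finset.filter_eq_empty_iff]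
      intro v _ hv
      exact hadj ⟨hef, v, by simpa using hv⟩

variable {G} {r : ℕ}

lemma trace_gram (hreg : G.IsRegularOfDegree r) :
    ((edgeInc G)ᵀ * edgeInc G).trace = Fintype.card V * r := by
  rw [trace_mul_comm, edgeInc_mul_transpose G hreg]
  simp [mul_comm]

lemma trace_gram_sq (hreg : G.IsRegularOfDegree r) :
    ((edgeInc G)ᵀ * edgeInc G * ((edgeInc G)ᵀ * edgeInc G)).trace
      = Fintype.card V * ((r : ℝ) ^ 2 + r) := by
  have h : ((edgeInc G)ᵀ * edgeInc G * ((edgeInc G)ᵀ * edgeInc G)).trace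
      = (edgeInc G * (edgeInc G)ᵀ * (edgeInc G * (edgeInc G)ᵀ)).trace := by
    rw [Matrix.mul_assoc, trace_mul_comm]
    simp only [Matrix.mul_assoc]
  have hA : (G.adjMatrix ℝ * G.adjMatrix ℝ).trace = Fintype.card V * r := by
    simp only [trace, diag_apply, SimpleGraph.adjMatrix_mul_self_apply_self, hreg.degree_eq]
    simp
  rw [h, edgeInc_mul_transpose G hreg]
  simp only [add_mul, mul_add, trace_add, smul_mul_assoc, mul_smul_comm, mul_one, one_mul,
    trace_smul, hA, SimpleGraph.trace_adjMatrix, trace_one, smul_eq_mul]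
  ring

lemma gram_mulVec_one (hreg : G.IsRegularOfDegree r) :
    ((edgeInc G)ᵀ * edgeInc G) *ᵥ (fun _ => (1 : ℝ)) = (2 * r : ℝ) • (fun _ => (1 : ℝ)) := by
  have h : edgeInc G *ᵥ (fun _ => (1 : ℝ)) = fun _ => (r : ℝ) := by
    ext v
    simp [mulVec, dotProduct, sum_edgeInc_row, hreg.degree_eq v]
  rw [← mulVec_mulVec, h]
  ext e
  simp [mulVec, dotProduct, ← Finset.sum_mul, sum_edgeInc_col]

end Incidence

/-! ### The second-moment estimate -/

/-- The second-moment bound: at most `n` of the numbers `ν i` are nonzero, so summing `(ν i - c)²`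
over the nonzero ones, and keeping only three of the terms, is controlled by the first two
moments. -/
lemma sum_three_sq_le {ι : Type*} [Fintype ι] [DecidableEq ι] (ν : ι → ℝ) (c : ℝ) (n : ℕ)
    (hn : (Finset.univ.filter fun i => ν i ≠ 0).card ≤ n) {i j k : ι}
    (hij : i ≠ j) (hik : i ≠ k) (hjk : j ≠ k) (hi : ν i ≠ 0) (hj : ν j ≠ 0) (hk : ν k ≠ 0) :
    (ν i - c) ^ 2 + (ν j - c) ^ 2 + (ν k - c) ^ 2
      ≤ ∑ l, ν l ^ 2 - 2 * c * ∑ l, ν l + c ^ 2 * n := by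
  set K := Finset.univ.filter fun i => ν i ≠ 0 with hK
  have h1 : ∑ l, ν l ^ 2 - 2 * c * ∑ l, ν l = ∑ l ∈ K, ((ν l - c) ^ 2 - c ^ 2) := by
    rw [Finset.mul_sum, ← Finset.sum_sub_distrib]
    symm
    calc _ = ∑ l, ((ν l - c) ^ 2 - c ^ 2) := by
          refine Finset.sum_subset (Finset.subset_univ _) fun l _ hl => ?_
          have : ν l = 0 := by simpa [hK] using hl
          rw [this]; ring
      _ = _ := Finset.sum_congr rfl fun l _ => by ring
  have h2 : ∑ l ∈ {i, j, k}, (ν l - c) ^ 2 ≤ ∑ l ∈ K, (ν l - c) ^ 2 := by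
    refine Finset.sum_le_sum_of_subset_of_nonneg ?_ fun _ _ _ => sq_nonneg _
    intro l hl
    simp only [Finset.mem_insert, Finset.mem_singleton] at hl
    rcases hl with rfl | rfl | rfl <;> simpa [hK]
  have h3 : ∑ l ∈ {i, j, k}, (ν l - c) ^ 2 = (ν i - c) ^ 2 + (ν j - c) ^ 2 + (ν k - c) ^ 2 := by
    rw [Finset.sum_insert (by simp [hij, hik]), Finset.sum_pair hjk, add_assoc]
  have h4 : c ^ 2 * (K.card : ℝ) ≤ c ^ 2 * n :=
    mul_le_mul_of_nonneg_left (by exact_mod_cast hn) (sq_nonneg _)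
  rw [h1, Finset.sum_sub_distrib, Finset.sum_const, nsmul_eq_mul]
  linarith

/-- The final quadratic inequality, with `c = 2r/3` and `m = nr/2`. -/
lemma quadratic_bound (n r x y : ℝ) (hr : 0 ≤ r) (hrn : r + 1 ≤ n)
    (hx : n * r / 6 + 2 ≤ x) (hy : n * r / 6 + 2 ≤ y) :
    n * (r ^ 2 + r) - 2 * (2 * r / 3) * (n * r) + (2 * r / 3) ^ 2 * n
      < (2 * r - 2 * r / 3) ^ 2 + (x - 2 * r / 3) ^ 2 + (y - 2 * r / 3) ^ 2 := by
  have ht : 0 ≤ n * r / 6 + 2 - 2 * r / 3 := by nlinarith [sq_nonneg (r - 3 / 2)]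
  have hx' := pow_le_pow_left₀ ht (sub_le_sub_right hx (2 * r / 3)) 2
  have hy' := pow_le_pow_left₀ ht (sub_le_sub_right hy (2 * r / 3)) 2
  -- With `p = nr`, the difference of both sides at `x = y = p/6 + 2` is
  -- `(p² - 10pr + 48r²)/18 + (p - 16r)/3 + 8`, a positive definite quadratic.
  have key : 0 < ((n * r) ^ 2 - 10 * (n * r) * r + 48 * r ^ 2) / 18
      + (n * r - 16 * r) / 3 + 8 := by
    nlinarith [sq_nonneg (n * r - 5 * r + 3), sq_nonneg (r - 33 / 23)]
  nlinarith

theorem stmt_2 {V : Type} [Fintype V] [DecidableEq V] (G : SimpleGraph V) [DecidableRel G.Adj]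
    (r : ℕ) (hreg : G.IsRegularOfDegree r) (hE : 3 ≤ G.edgeFinset.card) :
    graphLambda G.lineGraph 3 < (Fintype.card G.edgeSet : ℝ) / 3 := by
  by_contra! hcon
  have hm : G.edgeFinset.card = Fintype.card G.edgeSet := G.edgeFinset_card
  let := Classical.decRel G.lineGraph.Adj
  have hA : (G.lineGraph.adjMatrix ℝ).IsHermitian := by
    rw [IsHermitian, conjTranspose_eq_transpose_of_trivial, SimpleGraph.transpose_adjMatrix]
  have hcon' : (Fintype.card G.edgeSet : ℝ) / 3
      ≤ (((Finset.univ : Finset G.edgeSet).val.map hA.eigenvalues).sort (· ≥ ·)).getD 2 0 := by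
    simpa only [graphLambda, lambdaK, eigsDesc, dif_pos hA] using hcon
  have h3 := three_le_card_filter_of_sort _ _ (hm ▸ hE) hcon'
  have hgram := transpose_mul_edgeInc G
  -- Handshake: `nr = 2m`.
  have hshake : Fintype.card V * r = 2 * Fintype.card G.edgeSet := by
    have := G.sum_degrees_eq_twice_card_edges
    simpa [hreg.degree_eq, hm] using this
  have hr : 0 < r := by
    rcases Nat.eq_zero_or_pos r with h | h
    · subst h; omega
    · exact h
  have : Nonempty G.edgeSet := Fintype.card_pos_iff.1 (by omega)
  have hrn : r + 1 ≤ Fintype.card V := by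
    have hV : 0 < Fintype.card V := Nat.pos_of_ne_zero fun h => by rw [h] at hshake; omega
    obtain ⟨v⟩ := Fintype.card_pos_iff.1 hV
    exact hreg.degree_eq v ▸ G.degree_lt_card_verts v
  obtain ⟨i, hi⟩ := exists_eigenvalue_add hA 2 (v := fun _ => 1)
    (fun h => one_ne_zero (congrFun h (Classical.arbitrary _)))
    (hgram ▸ gram_mulVec_one hreg)
  -- Two further large eigenvalues, at indices other than that of the constant eigenvector.
  obtain ⟨j, hj, k, hk, hjk⟩ := Finset.one_lt_card.1
    (show 1 < ((Finset.univ.filter fun l =>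
      (Fintype.card G.edgeSet : ℝ) / 3 ≤ hA.eigenvalues l).erase i).card by
      have := Finset.pred_card_le_card_erase (a := i) (s := Finset.univ.filter fun l =>
        (Fintype.card G.edgeSet : ℝ) / 3 ≤ hA.eigenvalues l)
      omega)
  simp only [Finset.mem_erase, Finset.mem_filter, Finset.mem_univ, true_and] at hj hk
  have hshakeR : (Fintype.card V : ℝ) * r = 2 * Fintype.card G.edgeSet := by exact_mod_cast hshake
  have hmpos : (0 : ℝ) ≤ Fintype.card G.edgeSet := Nat.cast_nonneg _
  have hrpos : (0 : ℝ) < r := by exact_mod_cast hr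
  have hle := sum_three_sq_le (fun l => hA.eigenvalues l + 2) (2 * r / 3) (Fintype.card V)
    (by
      rw [card_eigenvalues_add_ne_zero hA 2, ← hgram]
      exact (rank_mul_le_right _ _).trans (rank_le_card_height _))
    hj.1.symm hk.1.symm hjk
    (by rw [hi]; positivity) (by linarith [hj.2] : (0 : ℝ) < _).ne'
    (by linarith [hk.2] : (0 : ℝ) < _).ne'
  rw [sum_eigenvalues_add hA 2, sum_eigenvalues_add_sq hA 2, ← hgram, trace_gram hreg,
    trace_gram_sq hreg, hi] at hle
  exact absurd hle (not_le.2 (quadratic_bound _ _ _ _ hrpos.le (by exact_mod_cast hrn)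
    (by linarith [hj.2]) (by linarith [hk.2])))
end

section
/- Let G be a semi-regular bipartite finite simple graph with at least 3 edges, i.e. there is a bipartition V(G) = A ∪ B such that every edge of G has one endpoint in A and one in B, every vertex of A has degree r₁, and every vertex of B has degree r₂. Then λ₃(L(G)) ≤ |V(L(G))|/3, i.e. λ₃(L(G)) ≤ |E(G)|/3. -/
/-!
Let `m = |E(G)|`, let `a`, `b` be the numbers of vertices on the two sides, with degrees `r`, `s`, so
that `m = a r = b s`, `s ≤ a`, `r ≤ b`. The adjacency matrix of `L(G)` is `r E₁ + s E₂ - 2`, where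
`E₁`, `E₂` are the orthogonal projections averaging a function on edges over the edges at a common
vertex of the first, respectively second, side (`lineGraph_form`). By Courant–Fischer
(`lambdaK_three_le`) it suffices to bound this form by `m / 3` on the vectors satisfying two linear
constraints (`exists_test_vectors`):

* If `a ≤ 2`, requiring the sums at the (at most two) vertices of the first side to vanish kills
  `E₁`, and the form is at most `s - 2 ≤ a - 2 ≤ 0`; likewise if `b ≤ 2` (`small_side`).
* If `a, b ≥ 3` and `G` is complete bipartite, then `E₁ E₂` is the projection onto the constants, so
  on vectors of sum `0` the form is at most `max r s - 2 < m / 3` (`complete_bound`).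
* If `a, b ≥ 3` and `G` is not complete bipartite, no constraint is needed: the form is at most
  `r + s - 2`, and `3 (r + s - 2) ≤ m` by elementary arithmetic (`small_arith`).
-/

open Matrix

/-! ### The third eigenvalue via Courant–Fischer -/

/-- The easy half of Courant–Fischer for `λ₃`: two linear constraints cannot exclude every vector
in the span of three eigenvectors. The hypothesis `0 ≤ t` covers the default value `0` that
`lambdaK` takes when there are fewer than three eigenvalues. -/
theorem lambdaK_three_le {E : Type} [Fintype E] [DecidableEq E] (M : Matrix E E ℝ) (t : ℝ)
    (ht : 0 ≤ t) (w : Fin 2 → E → ℝ)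
    (h : ∀ u : E → ℝ, (∀ k, w k ⬝ᵥ u = 0) → u ⬝ᵥ (M *ᵥ u) ≤ t * (u ⬝ᵥ u)) :
    lambdaK M 3 ≤ t := by
  unfold lambdaK eigsDesc
  split_ifs with hM
  swap
  · simpa using ht
  set l := ((Finset.univ : Finset E).val.map hM.eigenvalues).sort (· ≥ ·) with hl
  by_contra! hlt
  have hlen : 2 < l.length := by
    by_contra hle
    rw [List.getD_eq_default _ _ (by omega)] at hlt
    linarith
  have hsort : l.Pairwise (· ≥ ·) := Multiset.pairwise_sort _ _
  rw [show 3 - 1 = 2 from rfl, List.getD_eq_getElem _ _ hlen] at hlt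
  have hcount : 3 ≤ (Finset.univ.filter fun i => t < hM.eigenvalues i).card := by
    have h1 : (Finset.univ.filter fun i => t < hM.eigenvalues i).card
        = l.countP (fun x => t < x) := by
      rw [← Multiset.coe_countP, hl, Multiset.sort_eq, Multiset.countP_map]
      rfl
    rw [h1]
    have h2 : (l.take 3).countP (fun x => t < x) = (l.take 3).length := by
      rw [List.countP_eq_length]
      intro x hx
      obtain ⟨i, hi, rfl⟩ := List.mem_iff_getElem.1 hx
      have hi' : i < 3 := by simp at hi; omega
      rw [List.getElem_take]
      have : l[2] ≤ l[i] := by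
        rcases Nat.lt_or_ge i 2 with h3 | h3
        · exact List.pairwise_iff_getElem.1 hsort i 2 (by omega) hlen h3
        · have : i = 2 := by omega
          subst this; exact le_rfl
      simpa using lt_of_lt_of_le hlt this
    have h3 := (List.take_sublist 3 l).countP_le (p := fun x => decide (t < x))
    rw [h2, List.length_take] at h3
    omega
  set S := Finset.univ.filter fun i => t < hM.eigenvalues i with hS
  let v : E → E → ℝ := fun i => (hM.eigenvectorBasis i).ofLp
  have hv : ∀ i j, v i ⬝ᵥ v j = if i = j then 1 else 0 := by
    intro i j
    have := orthonormal_iff_ite.1 hM.eigenvectorBasis.orthonormal j i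
    simp only [EuclideanSpace.inner_eq_star_dotProduct] at this
    simpa [v, eq_comm] using this
  -- A combination of the `v i`, `i ∈ S`, orthogonal to both `w 0` and `w 1` has its coefficients
  -- in the kernel of `φ`, which is nontrivial because `2 < 3 ≤ S.card`.
  let φ : (S → ℝ) →ₗ[ℝ] (Fin 2 → ℝ) :=
    LinearMap.pi fun k => ∑ i : S, (w k ⬝ᵥ v i) • LinearMap.proj i
  have hker : LinearMap.ker φ ≠ ⊥ := by
    apply LinearMap.ker_ne_bot_of_finrank_lt
    simp only [Module.finrank_fintype_fun_eq_card, Fintype.card_fin, Fintype.card_coe]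
    omega
  obtain ⟨c, hc, hc0⟩ := (Submodule.ne_bot_iff _).1 hker
  let u : E → ℝ := ∑ i : S, c i • v i
  have hMu : M *ᵥ u = ∑ i : S, (c i * hM.eigenvalues i) • v i := by
    simp only [u, Matrix.mulVec_sum, Matrix.mulVec_smul]
    refine Finset.sum_congr rfl fun i _ => ?_
    rw [hM.mulVec_eigenvectorBasis, smul_smul]
  have hdot : ∀ d : S → ℝ, u ⬝ᵥ (∑ i : S, d i • v i) = ∑ i : S, c i * d i := by
    intro d
    simp [u, sum_dotProduct, dotProduct_sum, hv, mul_comm]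
  have key := h u (by
    intro k
    have := congrFun (LinearMap.mem_ker.1 hc) k
    simp only [u, dotProduct_sum, dotProduct_smul]
    simpa [φ, mul_comm] using this)
  rw [hMu, hdot, hdot, Finset.mul_sum] at key
  obtain ⟨i, hi⟩ := Function.ne_iff.1 hc0
  have : ∑ i : S, t * (c i * c i) < ∑ i : S, c i * (c i * hM.eigenvalues i) := by
    have hS' : ∀ i : S, t < hM.eigenvalues i := fun i => (Finset.mem_filter.1 i.2).2
    apply Finset.sum_lt_sum
    · intro j _
      nlinarith [hS' j, mul_self_nonneg (c j)]
    · refine ⟨i, Finset.mem_univ _, ?_⟩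
      have := mul_self_pos.2 hi
      nlinarith [hS' i]
  linarith

/-! ### Quadratic forms attached to a partition into equal fibres -/

/-- The sum of `u` over the fibre of `α` through `e`. If all fibres have size `r`, the operator
`u ↦ fiberSum α u` is `r` times the orthogonal projection onto the functions that are constant on
the fibres. -/
def fiberSum {E V : Type} [Fintype E] [DecidableEq V] (α : E → V) (u : E → ℝ) (e : E) : ℝ :=
  ∑ f, if α f = α e then u f else 0

section
variable {E V : Type} [Fintype E] [DecidableEq V]

theorem sum_fiberSum_sq (α : E → V) (r : ℕ)
    (hr : ∀ e, (Finset.univ.filter fun f => α f = α e).card = r) (u : E → ℝ) :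
    ∑ e, fiberSum α u e ^ 2 = r * ∑ e, u e * fiberSum α u e := by
  have h1 : ∀ e, fiberSum α u e ^ 2
      = ∑ f, if α f = α e then u f * fiberSum α u f else 0 := by
    intro e
    rw [sq]
    -- `fiberSum α u` is constant on the fibre of `e`, so it can be moved inside the sum.
    nth_rewrite 1 [fiberSum]
    rw [Finset.sum_mul]
    refine Finset.sum_congr rfl fun f _ => ?_
    split_ifs with h
    · simp only [fiberSum, h]
    · simp
  simp only [h1]
  rw [Finset.sum_comm, Finset.mul_sum]
  refine Finset.sum_congr rfl fun f _ => ?_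
  rw [← Finset.sum_filter, Finset.sum_const, nsmul_eq_mul, ← hr f]
  simp only [eq_comm]

theorem fiberForm_nonneg (α : E → V) (r : ℕ)
    (hr : ∀ e, (Finset.univ.filter fun f => α f = α e).card = r) (hr0 : 0 < r) (u : E → ℝ) :
    0 ≤ ∑ e, u e * fiberSum α u e := by
  have h := sum_fiberSum_sq α r hr u
  have h2 : 0 ≤ ∑ e, fiberSum α u e ^ 2 := Finset.sum_nonneg fun e _ => sq_nonneg _
  rw [h] at h2
  exact nonneg_of_mul_nonneg_right h2 (by exact_mod_cast hr0)

theorem fiberForm_le (α : E → V) (r : ℕ)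
    (hr : ∀ e, (Finset.univ.filter fun f => α f = α e).card = r) (hr0 : 0 < r) (u : E → ℝ) :
    ∑ e, u e * fiberSum α u e ≤ r * ∑ e, u e ^ 2 := by
  have h := sum_fiberSum_sq α r hr u
  have h2 : 0 ≤ ∑ e, (fiberSum α u e - r * u e) ^ 2 := Finset.sum_nonneg fun e _ => sq_nonneg _
  have h3 : ∑ e, (fiberSum α u e - r * u e) ^ 2 = ∑ e, fiberSum α u e ^ 2
      - 2 * r * ∑ e, u e * fiberSum α u e + r ^ 2 * ∑ e, u e ^ 2 := by
    rw [Finset.mul_sum, Finset.mul_sum, ← Finset.sum_sub_distrib, ← Finset.sum_add_distrib]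
    exact Finset.sum_congr rfl fun e _ => by ring
  have hr0' : (0 : ℝ) < r := by exact_mod_cast hr0
  rw [h3, h] at h2
  by_contra! hlt
  nlinarith

/-! ### Counting in a semi-regular bipartite graph -/

theorem card_eq_image_mul (α : E → V) (r : ℕ)
    (hr : ∀ e, (Finset.univ.filter fun f => α f = α e).card = r) :
    Fintype.card E = (Finset.univ.image α).card * r := by
  rw [← Finset.card_univ, Finset.card_eq_sum_card_image α, Finset.sum_const_nat]
  intro x hx
  obtain ⟨e, -, rfl⟩ := Finset.mem_image.1 hx
  exact hr e

/-- The edges at a fixed vertex on one side have distinct endpoints on the other side. -/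
theorem fiber_le_image (α β : E → V) (hinj : ∀ e f, α e = α f → β e = β f → e = f) (s : ℕ)
    (hs : ∀ e, (Finset.univ.filter fun f => β f = β e).card = s) (e₀ : E) :
    s ≤ (Finset.univ.image α).card := by
  rw [← hs e₀]
  apply Finset.card_le_card_of_injOn α
  · intro e _; simp
  · intro e he f hf hef
    simp at he hf
    exact hinj e f hef (he.trans hf.symm)

/-- If `s` equals the number of vertices on the `α`-side, the graph is complete bipartite. -/
theorem exists_cross (α β : E → V) (hinj : ∀ e f, α e = α f → β e = β f → e = f) (s : ℕ)
    (hs : ∀ e, (Finset.univ.filter fun f => β f = β e).card = s)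
    (hsa : s = (Finset.univ.image α).card) (f g : E) :
    ∃ e, α e = α f ∧ β e = β g := by
  have h := Finset.surjOn_of_injOn_of_card_le (s := Finset.univ.filter fun e => β e = β g)
    (t := Finset.univ.image α) α (fun e _ => by simp)
    (fun e he f hf hef => by
      simp at he hf
      exact hinj e f hef (he.trans hf.symm))
    (by rw [hs g, hsa])
  obtain ⟨e, he, hef⟩ := h (show α f ∈ _ by simp)
  exact ⟨e, hef, by simpa using he⟩

/-! ### The three cases -/

/-- For a complete bipartite graph the product of the two averaging projections is the projection
onto the constants. -/
theorem sum_cross (α β : E → V) (hinj : ∀ e f, α e = α f → β e = β f → e = f)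
    (hex : ∀ f g, ∃ e, α e = α f ∧ β e = β g) (u : E → ℝ) :
    ∑ e, fiberSum α u e * fiberSum β u e = (∑ e, u e) ^ 2 := by
  classical
  simp only [fiberSum, Finset.sum_mul_sum, sq]
  rw [Finset.sum_comm]
  refine Finset.sum_congr rfl fun f _ => ?_
  rw [Finset.sum_comm]
  refine Finset.sum_congr rfl fun g _ => ?_
  obtain ⟨e, he1, he2⟩ := hex f g
  rw [Finset.sum_eq_single e]
  · simp [he1, he2]
  · intro b _ hb
    split_ifs with h1 h2
    · exact absurd (hinj b e (h1.symm.trans he1.symm) (h2.symm.trans he2.symm)) hb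
    all_goals simp
  · simp

/-- In the complete bipartite case the two averaging projections have orthogonal ranges inside the
space of vectors with sum `0`, so there the norm of `r E₁ + s E₂` is at most `max r s`. -/
theorem complete_bound (α β : E → V) (hinj : ∀ e f, α e = α f → β e = β f → e = f)
    (hex : ∀ f g, ∃ e, α e = α f ∧ β e = β g) (r s : ℕ) (hr0 : 0 < r) (hs0 : 0 < s)
    (hr : ∀ e, (Finset.univ.filter fun f => α f = α e).card = r)
    (hs : ∀ e, (Finset.univ.filter fun f => β f = β e).card = s)
    (u : E → ℝ) (hu : ∑ e, u e = 0) :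
    ∑ e, u e * fiberSum α u e + ∑ e, u e * fiberSum β u e ≤ (max r s : ℕ) * ∑ e, u e ^ 2 := by
  have hp := sum_fiberSum_sq α r hr u
  have hq := sum_fiberSum_sq β s hs u
  have hp0 := fiberForm_nonneg α r hr hr0 u
  have hq0 := fiberForm_nonneg β s hs hs0 u
  have hx := sum_cross α β hinj hex u
  rw [hu] at hx
  have h2 : 0 ≤ ∑ e, (r * s * u e - s * fiberSum α u e - r * fiberSum β u e) ^ 2 :=
    Finset.sum_nonneg fun e _ => sq_nonneg _
  have h3 : ∑ e, (r * s * u e - s * fiberSum α u e - r * fiberSum β u e) ^ 2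
      = r ^ 2 * s ^ 2 * ∑ e, u e ^ 2 + s ^ 2 * ∑ e, fiberSum α u e ^ 2
        + r ^ 2 * ∑ e, fiberSum β u e ^ 2
        - 2 * r * s ^ 2 * ∑ e, u e * fiberSum α u e - 2 * r ^ 2 * s * ∑ e, u e * fiberSum β u e
        + 2 * r * s * ∑ e, fiberSum α u e * fiberSum β u e := by
    simp only [Finset.mul_sum, ← Finset.sum_sub_distrib, ← Finset.sum_add_distrib]
    exact Finset.sum_congr rfl fun e _ => by ring
  rw [h3, hp, hq, hx] at h2
  set p := ∑ e, u e * fiberSum α u e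
  set q := ∑ e, u e * fiberSum β u e
  set n := ∑ e, u e ^ 2
  have hr' : (0 : ℝ) < r := by exact_mod_cast hr0
  have hs' : (0 : ℝ) < s := by exact_mod_cast hs0
  have h4 : s * p + r * q ≤ r * s * n := by
    have : 0 ≤ ((r : ℝ) * s) * (r * s * n - (s * p + r * q)) := by nlinarith
    have := nonneg_of_mul_nonneg_right this (by positivity)
    linarith
  rcases le_total r s with h | h
  · rw [max_eq_right h]
    have h' : (r : ℝ) ≤ s := by exact_mod_cast h
    have : (r : ℝ) * (p + q) ≤ r * (s * n) := by nlinarith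
    exact le_of_mul_le_mul_left this hr'
  · rw [max_eq_left h]
    have h' : (s : ℝ) ≤ r := by exact_mod_cast h
    have : (s : ℝ) * (p + q) ≤ s * (r * n) := by nlinarith
    exact le_of_mul_le_mul_left this hs'

/-- Apart from complete bipartite graphs (`s = a`), the trivial bound `r + s - 2` on the spectral
radius of the line graph is at most one third of the number `a * r = b * s` of edges. -/
theorem small_arith (a b r s : ℕ) (ha : 3 ≤ a) (hb : 3 ≤ b) (hab : a ≤ b) (h : a * r = b * s)
    (hs : s ≤ a) (hne : ¬ s = a) : 3 * (r + s) ≤ a * r + 6 := by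
  rcases Nat.lt_or_ge a 6 with h6 | h6
  · have : s ≤ 5 := by omega
    interval_cases a <;> interval_cases s <;> omega
  · have h1 : 6 * r ≤ a * r := Nat.mul_le_mul_right _ h6
    have h2 : 6 * s ≤ b * s := Nat.mul_le_mul_right _ (by omega)
    omega

/-- If one side has at most two vertices, two constraints annihilate the form of that side, and the
other side has degree `s ≤ 2`. -/
theorem small_side (α β : E → V) (hinj : ∀ e f, α e = α f → β e = β f → e = f) (s : ℕ)
    (hs0 : 0 < s) (hs : ∀ e, (Finset.univ.filter fun f => β f = β e).card = s) (e₀ : E)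
    (ha : (Finset.univ.image α).card ≤ 2) :
    ∃ w : Fin 2 → E → ℝ, ∀ u : E → ℝ, (∀ k, w k ⬝ᵥ u = 0) →
      ∑ e, u e * fiberSum α u e + ∑ e, u e * fiberSum β u e ≤ 2 * ∑ e, u e ^ 2 := by
  obtain ⟨x, y, hxy⟩ : ∃ x y, Finset.univ.image α ⊆ {x, y} := by
    have h1 : 0 < (Finset.univ.image α).card := Finset.card_pos.2 ⟨α e₀, by simp⟩
    obtain h | h : (Finset.univ.image α).card = 1 ∨ (Finset.univ.image α).card = 2 := by omega
    · obtain ⟨x, hx⟩ := Finset.card_eq_one.1 h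
      exact ⟨x, x, by simp [hx]⟩
    · obtain ⟨x, y, -, hx⟩ := Finset.card_eq_two.1 h
      exact ⟨x, y, hx.subset⟩
  refine ⟨![fun e => if α e = x then 1 else 0, fun e => if α e = y then 1 else 0], ?_⟩
  intro u hu
  have h0 := hu 0
  have h1 := hu 1
  simp only [dotProduct, Matrix.cons_val_zero, Matrix.cons_val_one, ite_mul, one_mul,
    zero_mul] at h0 h1
  have hR : ∀ e, fiberSum α u e = 0 := by
    intro e
    have : α e ∈ ({x, y} : Finset V) := hxy (by simp)
    simp only [Finset.mem_insert, Finset.mem_singleton] at this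
    rcases this with h | h
    · simpa [fiberSum, h] using h0
    · simpa [fiberSum, h] using h1
  have hle := fiberForm_le β s hs hs0 u
  have hsa : s ≤ 2 := (fiber_le_image α β hinj s hs e₀).trans ha
  have hsa' : (s : ℝ) ≤ 2 := by exact_mod_cast hsa
  have hn : 0 ≤ ∑ e, u e ^ 2 := Finset.sum_nonneg fun e _ => sq_nonneg _
  simp only [hR, mul_zero, Finset.sum_const_zero, zero_add]
  nlinarith

/-- The combinatorial core: two constraints under which the form of `L(G) + 2` is at most
`|E| / 3 + 2`. Here `E` is the edge set and `α`, `β` pick the endpoints on the two sides. -/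
theorem exists_test_vectors (α β : E → V) (hinj : ∀ e f, α e = α f → β e = β f → e = f)
    (r s : ℕ)
    (hr : ∀ e, (Finset.univ.filter fun f => α f = α e).card = r)
    (hs : ∀ e, (Finset.univ.filter fun f => β f = β e).card = s) (e₀ : E) :
    ∃ w : Fin 2 → E → ℝ, ∀ u : E → ℝ, (∀ k, w k ⬝ᵥ u = 0) →
      ∑ e, u e * fiberSum α u e + ∑ e, u e * fiberSum β u e
        ≤ ((Fintype.card E : ℝ) / 3 + 2) * ∑ e, u e ^ 2 := by
  have hinj' : ∀ e f, β e = β f → α e = α f → e = f := fun e f h1 h2 => hinj e f h2 h1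
  have hr0 : 0 < r := by rw [← hr e₀]; exact Finset.card_pos.2 ⟨e₀, by simp⟩
  have hs0 : 0 < s := by rw [← hs e₀]; exact Finset.card_pos.2 ⟨e₀, by simp⟩
  have hn : ∀ u : E → ℝ, 0 ≤ ∑ e, u e ^ 2 := fun u => Finset.sum_nonneg fun e _ => sq_nonneg _
  have hm0 : (0 : ℝ) ≤ Fintype.card E := by positivity
  have hma := card_eq_image_mul α r hr
  have hmb := card_eq_image_mul β s hs
  have hsa := fiber_le_image α β hinj s hs e₀
  have hrb := fiber_le_image β α hinj' r hr e₀
  rcases Nat.lt_or_ge 2 (Finset.univ.image α).card with ha | ha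
  swap
  · obtain ⟨w, hw⟩ := small_side α β hinj s hs0 hs e₀ ha
    exact ⟨w, fun u hu => (hw u hu).trans (by nlinarith [hn u])⟩
  rcases Nat.lt_or_ge 2 (Finset.univ.image β).card with hb | hb
  swap
  · obtain ⟨w, hw⟩ := small_side β α hinj' r hr0 hr e₀ hb
    exact ⟨w, fun u hu => (add_comm _ _).trans_le ((hw u hu).trans (by nlinarith [hn u]))⟩
  have hm_r : 3 * r ≤ Fintype.card E := by rw [hma]; exact Nat.mul_le_mul_right _ ha
  have hm_s : 3 * s ≤ Fintype.card E := by rw [hmb]; exact Nat.mul_le_mul_right _ hb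
  by_cases hc : s = (Finset.univ.image α).card
  · refine ⟨fun _ _ => 1, fun u hu => ?_⟩
    have h := complete_bound α β hinj (exists_cross α β hinj s hs hc) r s hr0 hs0 hr hs u
      (by simpa [dotProduct] using hu 0)
    refine h.trans (mul_le_mul_of_nonneg_right ?_ (hn u))
    have : 3 * max r s ≤ Fintype.card E := by omega
    have : (3 : ℝ) * (max r s : ℕ) ≤ Fintype.card E := by exact_mod_cast this
    linarith
  · have hc' : ¬ r = (Finset.univ.image β).card := by
      intro h
      rw [hma, h, mul_comm] at hmb
      exact hc (Nat.eq_of_mul_eq_mul_left (by omega) hmb).symm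
    have hbound : 3 * (r + s) ≤ Fintype.card E + 6 := by
      rcases le_total (Finset.univ.image α).card (Finset.univ.image β).card with h | h
      · rw [hma]
        exact small_arith _ _ r s ha hb h (hma ▸ hmb) hsa hc
      · rw [hmb, add_comm r]
        exact small_arith _ _ s r hb ha h (hmb ▸ hma) hrb hc'
    refine ⟨fun _ _ => 0, fun u _ => ?_⟩
    have h1 := fiberForm_le α r hr hr0 u
    have h2 := fiberForm_le β s hs hs0 u
    have h3 : (3 : ℝ) * (r + s) ≤ Fintype.card E + 6 := by exact_mod_cast hbound
    nlinarith [hn u]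
end

/-! ### The line graph of a bipartite graph -/

/-- `A(L(G)) = NᵀN - 2` for the incidence matrix `N`, with `NᵀN` split according to the side of the
bipartition on which two edges meet. -/
theorem lineGraph_form {V : Type} [DecidableEq V] (G : SimpleGraph V)
    [Fintype G.edgeSet] [DecidableRel G.lineGraph.Adj]
    (α β : G.edgeSet → V) (hαβ : ∀ e : G.edgeSet, (e : Sym2 V) = s(α e, β e))
    (hne : ∀ e f, α e ≠ β f) (u : G.edgeSet → ℝ) :
    u ⬝ᵥ (G.lineGraph.adjMatrix ℝ *ᵥ u)
      = ∑ e, u e * fiberSum α u e + ∑ e, u e * fiberSum β u e - 2 * ∑ e, u e ^ 2 := by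
  have hadj : ∀ e f, G.lineGraph.Adj e f ↔ e ≠ f ∧ (α f = α e ∨ β f = β e) := by
    intro e f
    rw [SimpleGraph.lineGraph_adj_iff_exists, hαβ e, hαβ f]
    have h1 := hne e f
    have h2 := hne f e
    simp only [Sym2.mem_iff]
    constructor
    · rintro ⟨h, v, rfl | rfl, h' | h'⟩
      · exact ⟨h, Or.inl h'.symm⟩
      · exact absurd h' h1
      · exact absurd h'.symm h2
      · exact ⟨h, Or.inr h'.symm⟩
    · rintro ⟨h, h' | h'⟩
      · exact ⟨h, α e, Or.inl rfl, Or.inl h'.symm⟩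
      · exact ⟨h, β e, Or.inr rfl, Or.inr h'.symm⟩
  have hinj : ∀ e f, α f = α e → β f = β e → e = f := by
    intro e f h1 h2
    apply Subtype.ext
    rw [hαβ e, hαβ f, h1, h2]
  have hrow : ∀ e, (G.lineGraph.adjMatrix ℝ *ᵥ u) e
      = fiberSum α u e + fiberSum β u e - 2 * u e := by
    intro e
    have h2 : 2 * u e = ∑ f, if e = f then 2 * u f else 0 := by simp
    rw [h2, fiberSum, fiberSum, ← Finset.sum_add_distrib, ← Finset.sum_sub_distrib]
    simp only [Matrix.mulVec, dotProduct]
    refine Finset.sum_congr rfl fun f _ => ?_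
    rw [SimpleGraph.adjMatrix_apply]
    have h3 := hinj e f
    simp only [hadj]
    by_cases h : e = f
    · subst h; simp; ring
    · by_cases h4 : α f = α e
      · by_cases h5 : β f = β e
        · exact absurd (h3 h4 h5) h
        · simp [h, h4, h5]
      · by_cases h5 : β f = β e <;> simp [h, h4, h5]
  simp only [dotProduct, hrow, Finset.mul_sum, ← Finset.sum_sub_distrib, ← Finset.sum_add_distrib]
  exact Finset.sum_congr rfl fun e _ => by ring

theorem card_fiber_eq_degree {V : Type} [Fintype V] [DecidableEq V] (G : SimpleGraph V)
    [DecidableRel G.Adj] (α : G.edgeSet → V) (v : V)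
    (hα : ∀ e : G.edgeSet, α e = v ↔ v ∈ (e : Sym2 V)) :
    (Finset.univ.filter fun f => α f = v).card = G.degree v := by
  rw [← G.card_incidenceFinset_eq_degree]
  refine Finset.card_bij (fun e _ => (e : Sym2 V)) ?_ ?_ ?_
  · intro e he
    rw [SimpleGraph.mem_incidenceFinset]
    exact ⟨e.2, (hα e).1 (by simpa using he)⟩
  · intro e _ f _ h
    exact Subtype.ext h
  · intro e he
    rw [SimpleGraph.mem_incidenceFinset] at he
    exact ⟨⟨e, he.1⟩, by simpa using (hα ⟨e, he.1⟩).2 he.2, rfl⟩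

theorem stmt_3 {V : Type} [Fintype V] [DecidableEq V] (G : SimpleGraph V) [DecidableRel G.Adj]
    (A : Set V) (r₁ r₂ : ℕ)
    (hbip : ∀ u v : V, G.Adj u v → (u ∈ A ↔ v ∉ A))
    (hdegA : ∀ v ∈ A, G.degree v = r₁)
    (hdegB : ∀ v ∉ A, G.degree v = r₂)
    (hE : 3 ≤ G.edgeFinset.card) :
    graphLambda G.lineGraph 3 ≤ (Fintype.card G.edgeSet : ℝ) / 3 := by
  have hex : ∀ e : G.edgeSet, ∃ a b, a ∈ A ∧ b ∉ A ∧ (e : Sym2 V) = s(a, b) := by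
    rintro ⟨e, he⟩
    induction e with
    | _ a b =>
      have hab := hbip a b he
      by_cases ha : a ∈ A
      · exact ⟨a, b, ha, hab.1 ha, rfl⟩
      · exact ⟨b, a, by by_contra hb; exact ha (hab.2 hb), ha, Sym2.eq_swap⟩
  choose α β hα hβ hαβ using hex
  have hne : ∀ e f, α e ≠ β f := fun e f h => hβ f (h ▸ hα e)
  have hr : ∀ e, (Finset.univ.filter fun f => α f = α e).card = r₁ := by
    intro e
    rw [card_fiber_eq_degree G α (α e), hdegA _ (hα e)]
    intro f
    rw [hαβ f, Sym2.mem_iff]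
    exact ⟨fun h => Or.inl h.symm, fun h => (h.resolve_right (hne e f)).symm⟩
  have hs : ∀ e, (Finset.univ.filter fun f => β f = β e).card = r₂ := by
    intro e
    rw [card_fiber_eq_degree G β (β e), hdegB _ (hβ e)]
    intro f
    rw [hαβ f, Sym2.mem_iff]
    exact ⟨fun h => Or.inr h.symm, fun h => (h.resolve_left (hne f e).symm).symm⟩
  obtain ⟨e₀, he₀⟩ : G.edgeFinset.Nonempty := Finset.card_pos.1 (by omega)
  obtain ⟨w, hw⟩ := exists_test_vectors α β
    (fun e f h1 h2 => Subtype.ext (by rw [hαβ e, hαβ f, h1, h2])) r₁ r₂ hr hs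
    ⟨e₀, SimpleGraph.mem_edgeFinset.1 he₀⟩
  unfold graphLambda
  refine lambdaK_three_le _ _ (by positivity) w fun u hu => ?_
  classical
  rw [lineGraph_form G α β hαβ hne u]
  have h1 := hw u hu
  have h2 : u ⬝ᵥ u = ∑ e, u e ^ 2 := by simp [dotProduct, sq]
  rw [h2]
  linarith
end

section
/- Let Γ be a finite abelian group of order n ≥ 3 and let S ⊆ Γ satisfy e ∉ S and S = S⁻¹, where e is the identity. Then λ₃(Cay(Γ, S)) ≤ n/3. -/
/-!
The eigenvalues of `Cay(Γ, S)` are the numbers `λ_χ = ∑_{s ∈ S} Re χ(s)`, one for each complex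
character `χ` of `Γ` (`eigenvalues_eq_character_sums`): the characters form a basis of `Γ → ℂ`
consisting of eigenvectors. If the third largest eigenvalue exceeded `n / 3`, three distinct
characters, hence two distinct nontrivial ones `χ ≠ ψ`, would have `λ > n / 3`. This is excluded
by `sum_re_add_sum_re_le`, which shows `λ_χ + λ_ψ ≤ 2 n / 3`.

For that bound put `x = Re χ`, `y = Re ψ`, `z = x + y`. As `∑_Γ z = 0`, one has
`∑_S z ≤ (1/2) ∑_Γ |z|`, so `∑_Γ |z| ≤ 4 n / 3` suffices. Orthogonality of characters gives the
moments needed to bound it.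
* If `ψ = χ⁻¹`, then `y = x` and `χ² ≠ 1`, so `∑ x² = n / 2` and `∑ x⁴ ≥ 3 n / 8`; the inequality
  `9 |x| ≤ 2 + 11 x² - 4 x⁴` on `[-1, 1]` gives `∑ |x| ≤ 2 n / 3`. It is an equality at
  `|x| = 1/2` and `|x| = 1`, the values taken by characters of order `3`, where the bound is sharp.
* If `χ ψ ≠ 1`, then `∑ x y = 0`. When `χ² = ψ² = 1`, `z ∈ {0, 2, -2}`, so
  `∑ |z| = ∑ z² / 2 = n`. Otherwise `∑ z² ≤ 3 n / 2` and `|z| ≤ (1 + z²) / 2` give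
  `∑ |z| ≤ 5 n / 4`.

The argument is written for an additive group `G` (later `Additive Γ`), because the
character theory of finite abelian groups is stated for `AddChar`. The trivial character is `0` and
the product of characters is their sum.
-/

open Matrix

/-- The Cayley graph of a group `Γ` with connection set `S`: `g` and `h` are adjacent iff
`g * h⁻¹ ∈ S` (for `S` symmetric and not containing the identity, which is assumed in
the theorems below, this is exactly the usual Cayley graph). -/
def cayleyGraph {Γ : Type} [Group Γ] (S : Set Γ) : SimpleGraph Γ :=
  SimpleGraph.fromRel (fun g h => g * h⁻¹ ∈ S)

/-! ### Sums of real parts of characters -/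

section CharacterSums

lemma eq_one_or_neg_one_of_sq {x : ℝ} (h : x ^ 2 = 1) : x = 1 ∨ x = -1 :=
  sq_eq_sq_iff_eq_or_eq_neg.1 (by rw [h, one_pow])

variable {G : Type} [AddCommGroup G] [Fintype G]

lemma sum_re_eq_zero {χ : AddChar G ℂ} (h : χ ≠ 0) : ∑ g, (χ g).re = 0 := by
  rw [← Complex.re_sum, AddChar.sum_eq_zero_iff_ne_zero.2 h, Complex.zero_re]

lemma sum_re_nonneg (χ : AddChar G ℂ) : 0 ≤ ∑ g, (χ g).re := by
  classical
  rw [← Complex.re_sum, AddChar.sum_eq_ite]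
  split_ifs <;> simp

lemma re_sq_add_im_sq (χ : AddChar G ℂ) (g : G) : (χ g).re ^ 2 + (χ g).im ^ 2 = 1 := by
  have h := Complex.sq_norm (χ g)
  rw [AddChar.norm_apply, Complex.normSq_apply] at h
  linarith

/-- The double-angle formula for `cos = Re χ`. -/
lemma re_double (χ : AddChar G ℂ) (g : G) : ((χ + χ) g).re = 2 * (χ g).re ^ 2 - 1 := by
  have h := re_sq_add_im_sq χ g
  simp only [AddChar.add_apply, Complex.mul_re]
  linarith

/-- The product-to-sum formula for `cos = Re χ`. -/
lemma re_mul_re (χ ψ : AddChar G ℂ) (g : G) :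
    (χ g).re * (ψ g).re = (((χ + ψ) g).re + ((χ - ψ) g).re) / 2 := by
  rw [sub_eq_add_neg]
  simp only [AddChar.add_apply, AddChar.neg_apply, AddChar.map_neg_eq_conj, Complex.mul_re,
    Complex.conj_re, Complex.conj_im]
  ring

lemma sum_re_sq {χ : AddChar G ℂ} (h : χ + χ ≠ 0) :
    ∑ g, (χ g).re ^ 2 = (Fintype.card G : ℝ) / 2 := by
  have h1 := sum_re_eq_zero h
  simp only [re_double, Finset.sum_sub_distrib, ← Finset.mul_sum, Finset.sum_const,
    Finset.card_univ, nsmul_eq_mul, mul_one] at h1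
  linarith

lemma re_sq_eq_one {χ : AddChar G ℂ} (h : χ + χ = 0) (g : G) : (χ g).re ^ 2 = 1 := by
  have h1 := re_double χ g
  rw [h, AddChar.zero_apply, Complex.one_re] at h1
  linarith

lemma sum_re_sq_le (χ : AddChar G ℂ) : ∑ g, (χ g).re ^ 2 ≤ (Fintype.card G : ℝ) := by
  calc ∑ g, (χ g).re ^ 2 ≤ ∑ _g : G, (1 : ℝ) :=
        Finset.sum_le_sum fun g _ => by nlinarith [re_sq_add_im_sq χ g, sq_nonneg (χ g).im]
    _ = _ := by simp

/-- `cos⁴ θ = 3/8 + cos 2θ / 2 + cos 4θ / 8`; the last term has nonnegative sum even when `χ` has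
order `4`. -/
lemma le_sum_re_pow_four {χ : AddChar G ℂ} (h : χ + χ ≠ 0) :
    3 * (Fintype.card G : ℝ) / 8 ≤ ∑ g, (χ g).re ^ 4 := by
  have h1 := sum_re_nonneg (χ + χ + (χ + χ))
  have h2 := sum_re_sq h
  have h3 : ∀ g, ((χ + χ + (χ + χ)) g).re = 8 * (χ g).re ^ 4 - 8 * (χ g).re ^ 2 + 1 := fun g => by
    rw [re_double, re_double]; ring
  simp only [h3, Finset.sum_add_distrib, Finset.sum_sub_distrib, ← Finset.mul_sum,
    Finset.sum_const, Finset.card_univ, nsmul_eq_mul, mul_one] at h1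
  linarith

/-- `2 + 11 t² - 9 t - 4 t⁴ = (2 t - 1)² (1 - t) (t + 2)`, applied to `t = |x|`. -/
lemma abs_le_quartic {x : ℝ} (hx : |x| ≤ 1) : 9 * |x| ≤ 2 + 11 * x ^ 2 - 4 * x ^ 4 := by
  have h0 := abs_nonneg x
  have h : 0 ≤ (2 * |x| - 1) ^ 2 * ((1 - |x|) * (|x| + 2)) :=
    mul_nonneg (sq_nonneg _) (mul_nonneg (by linarith) (by linarith))
  have h2 : x ^ 2 = |x| ^ 2 := (sq_abs x).symm
  have h4 : x ^ 4 = |x| ^ 4 := by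
    rw [show x ^ 4 = (x ^ 2) ^ 2 by ring, h2]; ring
  rw [h2, h4]
  nlinarith

/-- A function with total sum zero has all partial sums at most half its `ℓ¹` norm. -/
lemma sum_le_half_sum_abs {ι : Type} [Fintype ι] (T : Finset ι) (z : ι → ℝ) (hz : ∑ g, z g = 0) :
    ∑ g ∈ T, z g ≤ (∑ g, |z g|) / 2 := by
  calc ∑ g ∈ T, z g ≤ ∑ g ∈ T, (|z g| + z g) / 2 :=
        Finset.sum_le_sum fun g _ => by linarith [le_abs_self (z g)]
    _ ≤ ∑ g, (|z g| + z g) / 2 :=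
        Finset.sum_le_sum_of_subset_of_nonneg (Finset.subset_univ _) fun g _ _ => by
          linarith [neg_abs_le (z g)]
    _ = _ := by rw [← Finset.sum_div, Finset.sum_add_distrib, hz, add_zero]

lemma sum_abs_re_le {χ : AddChar G ℂ} (h : χ + χ ≠ 0) :
    ∑ g, |(χ g).re| ≤ 2 * (Fintype.card G : ℝ) / 3 := by
  have h1 : ∑ g, 9 * |(χ g).re| ≤ ∑ g, (2 + 11 * (χ g).re ^ 2 - 4 * (χ g).re ^ 4) :=
    Finset.sum_le_sum fun g _ => abs_le_quartic <| by
      simpa using Complex.abs_re_le_norm (χ g)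
  simp only [Finset.sum_add_distrib, Finset.sum_sub_distrib, ← Finset.mul_sum,
    Finset.sum_const, Finset.card_univ, nsmul_eq_mul, sum_re_sq h] at h1
  linarith [le_sum_re_pow_four h]

lemma sum_abs_re_add_re_le {χ ψ : AddChar G ℂ} (hne : χ ≠ ψ) :
    ∑ g, |(χ g).re + (ψ g).re| ≤ 4 * (Fintype.card G : ℝ) / 3 := by
  have hn : (0 : ℝ) ≤ Fintype.card G := Nat.cast_nonneg _
  by_cases hinv : χ + ψ = 0
  · obtain rfl : ψ = -χ := (neg_eq_of_add_eq_zero_right hinv).symm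
    have h2 : χ + χ ≠ 0 := fun h => hne (eq_neg_of_add_eq_zero_left h)
    have h3 : ∀ g, |(χ g).re + ((-χ) g).re| = 2 * |(χ g).re| := fun g => by
      rw [AddChar.neg_apply, AddChar.map_neg_eq_conj, Complex.conj_re, ← two_mul, abs_mul, abs_two]
    simp only [h3, ← Finset.mul_sum]
    linarith [sum_abs_re_le h2]
  have hxy : ∑ g, (χ g).re * (ψ g).re = 0 := by
    simp only [re_mul_re, ← Finset.sum_div, Finset.sum_add_distrib]
    rw [sum_re_eq_zero hinv, sum_re_eq_zero (sub_ne_zero.2 hne)]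
    simp
  have hz2 : ∑ g, ((χ g).re + (ψ g).re) ^ 2 = ∑ g, (χ g).re ^ 2 + ∑ g, (ψ g).re ^ 2 := by
    simp only [add_sq, Finset.sum_add_distrib, mul_assoc, ← Finset.mul_sum, hxy]
    ring
  by_cases hreal : χ + χ = 0 ∧ ψ + ψ = 0
  · have habs : ∀ g, |(χ g).re + (ψ g).re| = ((χ g).re + (ψ g).re) ^ 2 / 2 := fun g => by
      rcases eq_one_or_neg_one_of_sq (re_sq_eq_one hreal.1 g) with h | h <;>
      rcases eq_one_or_neg_one_of_sq (re_sq_eq_one hreal.2 g) with h' | h' <;>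
      rw [h, h'] <;> norm_num
    simp only [habs, ← Finset.sum_div, hz2]
    linarith [sum_re_sq_le χ, sum_re_sq_le ψ]
  · have h32 : ∑ g, (χ g).re ^ 2 + ∑ g, (ψ g).re ^ 2 ≤ 3 * (Fintype.card G : ℝ) / 2 := by
      rcases not_and_or.1 hreal with h | h
      · linarith [sum_re_sq h, sum_re_sq_le ψ]
      · linarith [sum_re_sq h, sum_re_sq_le χ]
    have h1 : ∑ g, |(χ g).re + (ψ g).re| ≤ ∑ g, (1 + ((χ g).re + (ψ g).re) ^ 2) / 2 :=
      Finset.sum_le_sum fun g _ => by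
        nlinarith [sq_abs ((χ g).re + (ψ g).re), sq_nonneg (|(χ g).re + (ψ g).re| - 1)]
    simp only [← Finset.sum_div, Finset.sum_add_distrib, Finset.sum_const, Finset.card_univ,
      nsmul_eq_mul, mul_one, hz2] at h1
    linarith

/-- Two distinct nontrivial characters cannot both have sum of real parts over `T` larger than
`n / 3`. -/
lemma sum_re_add_sum_re_le (T : Finset G) {χ ψ : AddChar G ℂ} (hχ : χ ≠ 0) (hψ : ψ ≠ 0)
    (hne : χ ≠ ψ) :
    ∑ g ∈ T, (χ g).re + ∑ g ∈ T, (ψ g).re ≤ 2 * (Fintype.card G : ℝ) / 3 := by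
  have h := sum_le_half_sum_abs T (fun g => (χ g).re + (ψ g).re)
    (by rw [Finset.sum_add_distrib, sum_re_eq_zero hχ, sum_re_eq_zero hψ, add_zero])
  rw [Finset.sum_add_distrib] at h
  linarith [sum_abs_re_add_re_le hne]

end CharacterSums

/-! ### The spectrum of a Cayley graph -/

section Spectrum

variable {G : Type} [AddCommGroup G] [Fintype G] [DecidableEq G]

/-- Characters are eigenvectors of the complexified Cayley matrix. -/
lemma cayley_mulVec_character (T : Finset G) (A : Matrix G G ℝ)
    (hA : ∀ g h, A g h = if g - h ∈ T then 1 else 0) (χ : AddChar G ℂ) :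
    (A.map Complex.ofRealHom).mulVec χ = (∑ s ∈ T, χ (-s)) • (χ : G → ℂ) := by
  funext g
  simp only [Matrix.mulVec, dotProduct, Matrix.map_apply, hA, Pi.smul_apply, smul_eq_mul,
    Finset.sum_mul, ← AddChar.map_add_eq_mul]
  rw [← Equiv.sum_comp (Equiv.subLeft g)]
  simp [apply_ite, ite_mul, Finset.sum_ite_mem, sub_eq_neg_add]

lemma eigenvalues_eq_character_sums (T : Finset G) (A : Matrix G G ℝ)
    (hA : ∀ g h, A g h = if g - h ∈ T then 1 else 0) (hH : A.IsHermitian) :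
    (Finset.univ : Finset G).val.map hH.eigenvalues =
      (Finset.univ : Finset (AddChar G ℂ)).val.map fun χ => ∑ s ∈ T, (χ s).re := by
  have hdiag : LinearMap.toMatrix (AddChar.complexBasis G) (AddChar.complexBasis G)
      (Matrix.toLin' (A.map Complex.ofRealHom)) =
      Matrix.diagonal fun χ : AddChar G ℂ => ∑ s ∈ T, χ (-s) := by
    ext χ ψ
    rw [LinearMap.toMatrix_apply, AddChar.complexBasis_apply, Matrix.toLin'_apply,
      cayley_mulVec_character T A hA, ← AddChar.complexBasis_apply, map_smul,
      Module.Basis.repr_self, Matrix.diagonal_apply]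
    by_cases h : χ = ψ
    · simp [h]
    · simp [h]
  have hchar : (A.map Complex.ofRealHom).charpoly =
      ∏ χ : AddChar G ℂ, (Polynomial.X - Polynomial.C (∑ s ∈ T, χ (-s))) := by
    rw [← Matrix.charpoly_toLin', ← LinearMap.charpoly_toMatrix _ (AddChar.complexBasis G), hdiag,
      Matrix.charpoly_diagonal]
  have hchar' : (A.map Complex.ofRealHom).charpoly =
      ∏ g : G, (Polynomial.X - Polynomial.C (hH.eigenvalues g : ℂ)) := by
    rw [Matrix.charpoly_map, hH.charpoly_eq, Polynomial.map_prod]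
    simp
  have hroots : (Finset.univ : Finset G).val.map (fun g => (hH.eigenvalues g : ℂ)) =
      (Finset.univ : Finset (AddChar G ℂ)).val.map fun χ => ∑ s ∈ T, χ (-s) := by
    rw [← Polynomial.roots_multiset_prod_X_sub_C (Multiset.map _ (Finset.univ : Finset G).val),
      ← Polynomial.roots_multiset_prod_X_sub_C
        (Multiset.map _ (Finset.univ : Finset (AddChar G ℂ)).val), Multiset.map_map,
      Multiset.map_map]
    exact congrArg Polynomial.roots (hchar'.symm.trans hchar)
  have hre := congrArg (Multiset.map Complex.re) hroots
  simpa only [Multiset.map_map, Function.comp_def, Complex.ofReal_re, Complex.re_sum,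
    AddChar.map_neg_eq_conj, Complex.conj_re] using hre

/-- If the third entry of a decreasing list exceeds `c`, so do at least three entries. -/
lemma three_le_countP (l : List ℝ) (hl : l.Pairwise (· ≥ ·)) (h3 : 3 ≤ l.length) {c : ℝ}
    (hc : c < l.getD 2 0) : 3 ≤ l.countP (fun x => c < x) := by
  match l, h3 with
  | x :: y :: z :: t, _ =>
    simp only [List.getD_cons_succ, List.getD_cons_zero] at hc
    simp only [List.pairwise_cons, List.mem_cons, forall_eq_or_imp] at hl
    have hx : c < x := lt_of_lt_of_le hc hl.1.2.1
    have hy : c < y := lt_of_lt_of_le hc hl.2.1.1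
    simp [hx, hy, hc]

lemma lambdaK_three_le_s4 (T : Finset G) (A : Matrix G G ℝ)
    (hA : ∀ g h, A g h = if g - h ∈ T then 1 else 0) (hH : A.IsHermitian)
    (hn : 3 ≤ Fintype.card G) : lambdaK A 3 ≤ (Fintype.card G : ℝ) / 3 := by
  by_contra! hlt
  rw [lambdaK, eigsDesc, dif_pos hH] at hlt
  have hcount := three_le_countP _ (Multiset.pairwise_sort _ _) (by simpa using hn) hlt
  rw [← Multiset.coe_countP, Multiset.sort_eq, eigenvalues_eq_character_sums T A hA hH,
    Multiset.countP_map] at hcount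
  obtain ⟨a, ha, b, hb, c, hc, hab, hac, hbc⟩ := (Finset.two_lt_card
    (s := Finset.univ.filter fun χ : AddChar G ℂ =>
      (Fintype.card G : ℝ) / 3 < ∑ s ∈ T, (χ s).re)).1 hcount
  simp only [Finset.mem_filter, Finset.mem_univ, true_and] at ha hb hc
  have key : ∀ χ ψ : AddChar G ℂ, (Fintype.card G : ℝ) / 3 < ∑ s ∈ T, (χ s).re →
      (Fintype.card G : ℝ) / 3 < ∑ s ∈ T, (ψ s).re → χ ≠ ψ → χ = 0 ∨ ψ = 0 := by
    intro χ ψ h1 h2 hne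
    by_contra! h0
    linarith [sum_re_add_sum_re_le T h0.1 h0.2 hne]
  rcases key a b ha hb hab with h | h
  · rcases key b c hb hc hbc with h' | h'
    · exact hab (h.trans h'.symm)
    · exact hac (h.trans h'.symm)
  · rcases key a c ha hc hac with h' | h'
    · exact hab (h'.trans h.symm)
    · exact hbc (h.trans h'.symm)

end Spectrum

/-- `lambdaK_three_le` for multiplicative groups, by transfer to `Additive Γ`. -/
lemma lambdaK_three_le_of_commGroup {Γ : Type} [CommGroup Γ] [i : Fintype Γ] [d : DecidableEq Γ]
    (T : Finset Γ) (A : Matrix Γ Γ ℝ) (hA : ∀ g h, A g h = if g / h ∈ T then 1 else 0)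
    (hH : A.IsHermitian) (hn : 3 ≤ Fintype.card Γ) :
    lambdaK A 3 ≤ (Fintype.card Γ : ℝ) / 3 :=
  @lambdaK_three_le_s4 (Additive Γ) Additive.addCommGroup i d T A hA hH hn

theorem stmt_4 {Γ : Type} [CommGroup Γ] [Fintype Γ] [DecidableEq Γ] (S : Set Γ)
    (hid : (1 : Γ) ∉ S) (hsymm : S⁻¹ = S) (hn : 3 ≤ Fintype.card Γ) :
    graphLambda (cayleyGraph S) 3 ≤ (Fintype.card Γ : ℝ) / 3 := by
  classical
  have hadj : ∀ g h : Γ, (cayleyGraph S).Adj g h ↔ g * h⁻¹ ∈ S := by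
    intro g h
    have hswap : h * g⁻¹ ∈ S ↔ g * h⁻¹ ∈ S := by
      conv_lhs => rw [← hsymm, Set.mem_inv]
      simp
    rw [cayleyGraph, SimpleGraph.fromRel_adj, hswap, or_self, and_iff_right_iff_imp]
    rintro hmem rfl
    exact hid (by simpa using hmem)
  let _ := Classical.decRel (cayleyGraph S).Adj
  have hentry : ∀ g h : Γ, (cayleyGraph S).adjMatrix ℝ g h =
      if g / h ∈ S.toFinset then 1 else 0 := fun g h => by
    simp only [SimpleGraph.adjMatrix_apply, hadj, Set.mem_toFinset, div_eq_mul_inv]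
  have hherm : ((cayleyGraph S).adjMatrix ℝ).IsHermitian :=
    (Matrix.conjTranspose_eq_transpose_of_trivial _).trans
      (SimpleGraph.isSymm_adjMatrix (α := ℝ) (G := cayleyGraph S))
  have hmain : lambdaK ((cayleyGraph S).adjMatrix ℝ) 3 ≤ (Fintype.card Γ : ℝ) / 3 :=
    lambdaK_three_le_of_commGroup S.toFinset _ hentry hherm hn
  exact hmain
end

section
/- Let Γ be either a dihedral group of order 2m (m ≥ 2) or a dicyclic (generalised quaternion-type) group of order 4m (m ≥ 1), let n = |Γ|, and let S ⊆ Γ satisfy e ∉ S and S = S⁻¹. Then λ₃(Cay(Γ, S)) ≤ n/3. -/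
/-!
Both families of groups have a cyclic subgroup of index two, of order `N`, whose generator is
inverted by the other coset. Splitting the group into "rotations" and "reflections" indexed by
`ZMod N`, the symmetry of `S` makes the adjacency matrix in both cases the dihedral one, with
entries `α (i - j)`, `α (j - i)` in the diagonal blocks and `β` of a difference in the other
two; the claim becomes `λ₃ ≤ 2N/3` (`lambdaK_block_le`).

By Courant–Fischer (`lambdaK_three_le`) it suffices to bound the quadratic form on the complement of
two vectors. Parseval (`quadForm_fourier`) splits the form over the characters `k` of `ZMod N`.

* If `2k ≠ 0`, the block has eigenvalues `a ± |b|`, with `a`, `b` the Fourier coefficients of `α`, `β`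
  at `k`. Both are sums of real parts of points of the unit circle with weights in `[0, 1]`. The
  positive part of `x` is at most `x/2 + 1/9 + 11x²/18 - 2x⁴/9` on `[-1, 1]`, and averaging this over the
  values of the character gives `a + |b| ≤ N/3 + N/3`; when `k` has order four the quartic terms
  do not cancel, but their total has the right sign (`two_dim_bound`).
* If `2k = 0`, the block splits into two sign characters. The eigenvalues of two distinct
  nontrivial sign characters add up to at most `N` (`charEig_add_le`), so at most one of them
  exceeds `2N/3`. This one and the trivial character are the two vectors to be avoided.
-/

open Matrix

/-! ### A Courant–Fischer bound -/

/-- One half of the Courant–Fischer principle: if the quadratic form of `A` is at most `c ‖v‖²` on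
the orthogonal complement of two vectors, then the third largest eigenvalue of `A` is at most `c`.
Nonnegativity of `c` covers the default value of `lambdaK` when there are fewer than three
eigenvalues. -/
lemma lambdaK_three_le_s9 {V : Type} [Fintype V] [DecidableEq V] (A : Matrix V V ℝ)
    (hA : A.IsHermitian) (c : ℝ) (hc : 0 ≤ c) (u₁ u₂ : V → ℝ)
    (H : ∀ v : V → ℝ, u₁ ⬝ᵥ v = 0 → u₂ ⬝ᵥ v = 0 → v ⬝ᵥ (A *ᵥ v) ≤ c * (v ⬝ᵥ v)) :
    lambdaK A 3 ≤ c := by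
  by_contra! hlt
  unfold lambdaK eigsDesc at hlt
  rw [dif_pos hA] at hlt
  set L := ((Finset.univ : Finset V).val.map hA.eigenvalues).sort (· ≥ ·) with hL
  have hsort : L.Pairwise (· ≥ ·) := Multiset.pairwise_sort _ _
  have hlen : 2 < L.length := by
    by_contra! h
    rw [List.getD_eq_default _ _ (by simpa using h)] at hlt
    linarith
  rw [List.getD_eq_getElem _ _ (by simpa using hlen)] at hlt
  set T : Finset V := Finset.univ.filter (fun i => c < hA.eigenvalues i) with hT
  have hTcard : 3 ≤ T.card := by
    have h1 : T.card = L.countP (fun x => decide (c < x)) := by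
      have : (L : Multiset ℝ).countP (fun x => c < x) = T.card := by
        rw [hL, Multiset.sort_eq, Multiset.countP_map]
        rfl
      rw [← this, Multiset.coe_countP]
    rw [h1]
    have h2 : (L.take 3).countP (fun x => decide (c < x)) = (L.take 3).length := by
      rw [List.countP_eq_length]
      intro a ha
      obtain ⟨i, hi, rfl⟩ := List.mem_iff_getElem.1 ha
      rw [List.getElem_take]
      rw [List.length_take] at hi
      have hi2 : i ≤ 2 := by omega
      have : L[2] ≤ L[i]'(by omega) := by
        rcases hi2.lt_or_eq with h | h
        · exact List.pairwise_iff_getElem.1 hsort i 2 _ _ h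
        · subst h; exact le_rfl
      simpa using lt_of_lt_of_le hlt this
    have h3 : (L.take 3).countP (fun x => decide (c < x)) ≤ L.countP (fun x => decide (c < x)) :=
      List.Sublist.countP_le (List.take_sublist 3 L)
    rw [h2, List.length_take] at h3
    omega
  let W : V → V → ℝ := fun i => (hA.eigenvectorBasis i).ofLp
  have hW : ∀ i j, W i ⬝ᵥ W j = if i = j then 1 else 0 := by
    intro i j
    have := orthonormal_iff_ite.1 hA.eigenvectorBasis.orthonormal j i
    rw [EuclideanSpace.inner_eq_star_dotProduct] at this
    simp only [star_trivial] at this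
    rw [this]
    simp [eq_comm]
  have hAW : ∀ i, A *ᵥ W i = hA.eigenvalues i • W i := fun i => hA.mulVec_eigenvectorBasis i
  let comb : (T → ℝ) →ₗ[ℝ] (V → ℝ) := Fintype.linearCombination ℝ (fun i : T => W i)
  have hcomb : ∀ x, comb x = ∑ i : T, x i • W i := fun x => Fintype.linearCombination_apply _ _ _
  let φ : (T → ℝ) →ₗ[ℝ] (Fin 2 → ℝ) :=
    (Matrix.mulVecLin (Matrix.of ![u₁, u₂])).comp comb
  have hker : LinearMap.ker φ ≠ ⊥ := by
    apply LinearMap.ker_ne_bot_of_finrank_lt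
    simp
    omega
  obtain ⟨x, hx, hx0⟩ := (Submodule.ne_bot_iff _).1 hker
  have hφ : Matrix.of ![u₁, u₂] *ᵥ comb x = 0 := hx
  have h1 : u₁ ⬝ᵥ comb x = 0 := by simpa [Matrix.mulVec] using congrFun hφ 0
  have h2 : u₂ ⬝ᵥ comb x = 0 := by simpa [Matrix.mulVec] using congrFun hφ 1
  have h3 := H _ h1 h2
  have e1 : comb x ⬝ᵥ comb x = ∑ i : T, x i ^ 2 := by
    simp only [hcomb, sum_dotProduct, dotProduct_sum, smul_dotProduct, dotProduct_smul, hW,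
      smul_eq_mul, ← Subtype.ext_iff]
    simp [pow_two]
  have e2 : comb x ⬝ᵥ (A *ᵥ comb x) = ∑ i : T, hA.eigenvalues i * x i ^ 2 := by
    simp only [hcomb, Matrix.mulVec_sum, Matrix.mulVec_smul, hAW, sum_dotProduct, dotProduct_sum,
      smul_dotProduct, dotProduct_smul, hW, smul_eq_mul, ← Subtype.ext_iff]
    simp
    exact Finset.sum_congr rfl fun i _ => by ring
  rw [e1, e2, Finset.mul_sum] at h3
  obtain ⟨i, hi⟩ := Function.ne_iff.1 hx0
  have hev : ∀ j : T, c < hA.eigenvalues j := fun j => (Finset.mem_filter.1 j.2).2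
  refine absurd h3 (not_le.2 (Finset.sum_lt_sum (fun j _ => ?_) ⟨i, Finset.mem_univ _, ?_⟩))
  · exact mul_le_mul_of_nonneg_right (hev j).le (sq_nonneg _)
  · exact mul_lt_mul_of_pos_right (hev i) (sq_pos_of_ne_zero hi)

/-! ### Fourier analysis on `ZMod N` -/

open ZMod ComplexConjugate

/-- The Fourier coefficient at `k` of a real function on `ZMod N`, in the normalisation
`∑ⱼ f(j) e(jk)`. -/
noncomputable def fourierCoeffZ {N : ℕ} [NeZero N] (f : ZMod N → ℝ) (k : ZMod N) : ℂ :=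
  ∑ j, (f j : ℂ) * stdAddChar (j * k)

lemma sum_stdAddChar_mul {N : ℕ} [NeZero N] (b : ZMod N) :
    ∑ x : ZMod N, (stdAddChar (x * b) : ℂ) = if b = 0 then (N : ℂ) else 0 := by
  rw [AddChar.sum_mulShift b (isPrimitive_stdAddChar N)]
  split_ifs <;> simp [ZMod.card]

/-- Parseval's formula for a convolution. -/
lemma parseval_conv {N : ℕ} [NeZero N] (f g c : ZMod N → ℝ) :
    ∑ k, conj (fourierCoeffZ f k) * fourierCoeffZ g k * fourierCoeffZ c k =
      (N : ℂ) * ((∑ i, ∑ j, c (i - j) * f i * g j : ℝ) : ℂ) := by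
  have h1 : ∀ k, conj (fourierCoeffZ f k) * fourierCoeffZ g k * fourierCoeffZ c k =
      ∑ i, ∑ j, ∑ t, (f i * g j * c t : ℂ) * stdAddChar (k * (t + j - i)) := by
    intro k
    simp only [fourierCoeffZ, map_sum, map_mul, Complex.conj_ofReal, ← AddChar.map_neg_eq_conj]
    rw [Finset.sum_mul_sum, Finset.sum_mul]
    refine Finset.sum_congr rfl fun i _ => ?_
    rw [Finset.sum_mul_sum]
    refine Finset.sum_congr rfl fun j _ => Finset.sum_congr rfl fun t _ => ?_
    have : k * (t + j - i) = -(i * k) + j * k + t * k := by ring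
    rw [this, AddChar.map_add_eq_mul, AddChar.map_add_eq_mul]
    ring
  simp only [h1]
  rw [Finset.sum_comm]
  push_cast
  rw [Finset.mul_sum]
  refine Finset.sum_congr rfl fun i _ => ?_
  rw [Finset.sum_comm, Finset.mul_sum]
  refine Finset.sum_congr rfl fun j _ => ?_
  rw [Finset.sum_comm]
  simp only [← Finset.mul_sum, sum_stdAddChar_mul]
  rw [Finset.sum_eq_single (i - j)]
  · simp; ring
  · intro t _ ht
    rw [if_neg, mul_zero]
    intro h
    exact ht (by linear_combination h)
  · simp

lemma parseval_sq {N : ℕ} [NeZero N] (f : ZMod N → ℝ) :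
    ∑ k, Complex.normSq (fourierCoeffZ f k) = N * ∑ i, f i ^ 2 := by
  have h := parseval_conv f f (Pi.single 0 1)
  have h1 : ∀ k : ZMod N, fourierCoeffZ (Pi.single 0 1) k = 1 := by
    intro k
    unfold fourierCoeffZ
    rw [Finset.sum_eq_single 0]
    · simp
    · intro b _ hb; simp [hb]
    · simp
  have h2 : ∀ i, ∑ j, (Pi.single 0 1 : ZMod N → ℝ) (i - j) * f i * f j = f i ^ 2 := by
    intro i
    rw [Finset.sum_eq_single i]
    · simp [pow_two]
    · intro j _ hj
      rw [Pi.single_eq_of_ne (sub_ne_zero.2 hj.symm)]; simp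
    · simp
  simp only [h1, h2, mul_one, ← Complex.normSq_eq_conj_mul_self] at h
  exact_mod_cast h

/-! ### Characters of order at least three -/

/-- A quartic majorant of the positive part on `[-1, 1]`, with equality at `-1`, `±1/2`, `1`.  Its mean
over the unit circle (in the variable `x = cos θ`) is exactly `1/3`. -/
lemma mul_le_quartic {w x : ℝ} (hw0 : 0 ≤ w) (hw1 : w ≤ 1) (hx : |x| ≤ 1) :
    w * x ≤ x / 2 + 1 / 9 + 11 / 18 * x ^ 2 - 2 / 9 * x ^ 4 := by
  obtain ⟨h1, h2⟩ := abs_le.1 hx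
  rcases le_total 0 x with h | h
  · have : 0 ≤ (1 - x) * (2 * x - 1) ^ 2 * (x + 2) := by
      have : 0 ≤ 1 - x := by linarith
      positivity
    nlinarith [mul_le_mul_of_nonneg_right hw1 h]
  · have : 0 ≤ (1 + x) * (2 * x + 1) ^ 2 * (2 - x) := by
      have : 0 ≤ 1 + x := by linarith
      have : 0 ≤ 2 - x := by linarith
      positivity
    nlinarith [mul_nonneg hw0 (neg_nonneg.2 h)]

/-- The quartic of `mul_le_quartic` at `Re z`, expanded in Fourier modes for `z` on the unit
circle. -/
lemma quartic_re {z : ℂ} (hz : ‖z‖ = 1) :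
    z.re / 2 + 1 / 9 + 11 / 18 * z.re ^ 2 - 2 / 9 * z.re ^ 4 =
      1 / 3 + z.re / 2 + 7 / 36 * (z ^ 2).re - 1 / 36 * (z ^ 4).re := by
  have h : z.im ^ 2 = 1 - z.re ^ 2 := by
    have := Complex.sq_norm z
    rw [hz, Complex.normSq_apply] at this
    nlinarith
  have e2 : (z ^ 2).re = 2 * z.re ^ 2 - 1 := by
    have : (z ^ 2).re = z.re ^ 2 - z.im ^ 2 := by simp [pow_two]
    rw [this, h]; ring
  have e4 : (z ^ 4).re = (z ^ 2).re ^ 2 - 4 * z.re ^ 2 * z.im ^ 2 := by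
    have : z ^ 4 = z ^ 2 * z ^ 2 := by ring
    rw [this]; simp [pow_two]; ring
  rw [e4, h, e2]; ring

/-- Weighted half-plane sum of the character `k` rotated by `u`, when the character has order at
least three.  The last term is present only when the order is four. -/
lemma sum_re_le {N : ℕ} [NeZero N] (k : ZMod N) (hk : k + k ≠ 0) (w : ZMod N → ℝ)
    (hw : ∀ i, 0 ≤ w i ∧ w i ≤ 1) (u : ℂ) (hu : ‖u‖ = 1) :
    (u * fourierCoeffZ w k).re ≤
      N / 3 - N / 36 * (if 4 * k = 0 then (u ^ 4).re else 0) := by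
  have e0 : (u * fourierCoeffZ w k).re = ∑ i, w i * (u * stdAddChar (i * k)).re := by
    unfold fourierCoeffZ
    rw [Finset.mul_sum, Complex.re_sum]
    refine Finset.sum_congr rfl fun i _ => ?_
    rw [mul_left_comm, Complex.re_ofReal_mul]
  have hn : ∀ i, ‖u * (stdAddChar (i * k) : ℂ)‖ = 1 := by
    intro i; rw [norm_mul, hu, AddChar.norm_apply, one_mul]
  have hS : ∀ (p : ℕ), ∑ i, ((u * (stdAddChar (i * k) : ℂ)) ^ p).re =
      (if (p : ZMod N) * k = 0 then N * (u ^ p).re else 0) := by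
    intro p
    rw [← Complex.re_sum]
    have : ∀ i, (u * (stdAddChar (i * k) : ℂ)) ^ p = u ^ p * stdAddChar (i * ((p : ZMod N) * k)) := by
      intro i
      rw [mul_pow, ← AddChar.map_nsmul_eq_pow]
      congr 2
      rw [nsmul_eq_mul]; ring
    simp only [this]
    rw [← Finset.mul_sum, sum_stdAddChar_mul]
    split_ifs
    · rw [mul_comm, ← Complex.ofReal_natCast, Complex.re_ofReal_mul]
    · simp
  have hk1 : k ≠ 0 := by rintro rfl; simp at hk
  have S1 := hS 1
  have S2 := hS 2
  have S4 := hS 4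
  rw [if_neg (by simpa using hk1)] at S1
  rw [if_neg (by push_cast; rwa [two_mul])] at S2
  push_cast at S4
  simp only [pow_one] at S1
  rw [e0]
  calc _ ≤ ∑ i, (1 / 3 + (u * (stdAddChar (i * k) : ℂ)).re / 2
            + 7 / 36 * ((u * (stdAddChar (i * k) : ℂ)) ^ 2).re
            - 1 / 36 * ((u * (stdAddChar (i * k) : ℂ)) ^ 4).re) := by
        refine Finset.sum_le_sum fun i _ => ?_
        rw [← quartic_re (hn i)]
        exact mul_le_quartic (hw i).1 (hw i).2 ((Complex.abs_re_le_norm _).trans (hn i).le)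
    _ = _ := by
        rw [Finset.sum_sub_distrib, Finset.sum_add_distrib, Finset.sum_add_distrib,
          ← Finset.sum_div, ← Finset.sum_div, ← Finset.mul_sum, ← Finset.mul_sum, S1, S2, S4]
        simp only [Finset.sum_const, Finset.card_univ, ZMod.card, nsmul_eq_mul]
        split_ifs <;> ring

/-- The eigenvalues attached to the two-dimensional representation given by `k`
(with `2k ≠ 0`) are at most `2N/3`.  When `4k = 0`, the excess of the reflection part is
compensated by the rotation part. -/
lemma two_dim_bound {N : ℕ} [NeZero N] (k : ZMod N) (hk : k + k ≠ 0) (α β : ZMod N → ℝ)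
    (hα : ∀ i, 0 ≤ α i ∧ α i ≤ 1) (hβ : ∀ i, 0 ≤ β i ∧ β i ≤ 1) :
    (fourierCoeffZ α k).re + ‖fourierCoeffZ β k‖ ≤ 2 * N / 3 := by
  obtain ⟨u, hu, hub⟩ : ∃ u : ℂ, ‖u‖ = 1 ∧ (u * fourierCoeffZ β k).re = ‖fourierCoeffZ β k‖ := by
    obtain ⟨u, hu, h⟩ := RCLike.exists_norm_eq_mul_self (fourierCoeffZ β k)
    refine ⟨u, hu, ?_⟩
    rw [← h]; simp
  have h1 := sum_re_le k hk α hα 1 (by simp)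
  have h2 := sum_re_le k hk β hβ u hu
  rw [hub] at h2
  rw [one_mul] at h1
  have h4 : -1 ≤ (u ^ 4).re := by
    have := (abs_le.1 (Complex.abs_re_le_norm (u ^ 4))).1
    rwa [norm_pow, hu, one_pow] at this
  have hN : (0 : ℝ) ≤ N := Nat.cast_nonneg N
  split_ifs at h1 h2
  · simp only [one_pow, Complex.one_re] at h1
    nlinarith
  · linarith

/-! ### Sign characters -/

/-- The values of the character `k` of `ZMod N`, as real numbers; used when `2k = 0`. -/
noncomputable def realChar {N : ℕ} [NeZero N] (k i : ZMod N) : ℝ := (stdAddChar (i * k) : ℂ).re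

lemma realChar_cases {N : ℕ} [NeZero N] {k : ZMod N} (hk : k + k = 0) (i : ZMod N) :
    (stdAddChar (i * k) : ℂ) = realChar k i ∧ (realChar k i = 1 ∨ realChar k i = -1) := by
  have h : (stdAddChar (i * k) : ℂ) * stdAddChar (i * k) = 1 := by
    rw [← AddChar.map_add_eq_mul, ← mul_add, hk, mul_zero, AddChar.map_zero_eq_one]
  unfold realChar
  rcases mul_self_eq_one_iff.1 h with h | h <;> rw [h] <;> simp

lemma fourierCoeffZ_real {N : ℕ} [NeZero N] {k : ZMod N} (hk : k + k = 0) (f : ZMod N → ℝ) :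
    fourierCoeffZ f k = ((∑ i, f i * realChar k i : ℝ) : ℂ) := by
  unfold fourierCoeffZ
  push_cast
  exact Finset.sum_congr rfl fun i _ => by rw [(realChar_cases hk i).1]

lemma sum_realChar {N : ℕ} [NeZero N] (k : ZMod N) :
    ∑ i, realChar k i = if k = 0 then (N : ℝ) else 0 := by
  unfold realChar
  rw [← Complex.re_sum, sum_stdAddChar_mul]
  split_ifs <;> simp

lemma sum_realChar_mul {N : ℕ} [NeZero N] {k l : ZMod N} (hk : k + k = 0) (hl : l + l = 0)
    (hkl : k ≠ l) : ∑ i, realChar k i * realChar l i = 0 := by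
  have : ∀ i, realChar k i * realChar l i = realChar (k + l) i := by
    intro i
    have h := (realChar_cases (k := k + l) (by linear_combination hk + hl) i).1
    rw [mul_add, AddChar.map_add_eq_mul, (realChar_cases hk i).1, (realChar_cases hl i).1] at h
    exact_mod_cast h
  simp only [this]
  rw [sum_realChar, if_neg]
  intro h
  exact hkl (by linear_combination h - hl)

/-- The eigenvalue attached to the sign character `(k, σ)` of the dihedral group of order `2N`, where
`2k = 0` and `σ = ±1`: this character takes the value `realChar k i` on the `i`-th rotation and
`σ * realChar k i` on the `i`-th reflection. -/
noncomputable def charEig {N : ℕ} [NeZero N] (α β : ZMod N → ℝ) (k : ZMod N) (σ : ℝ) : ℝ :=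
  ∑ i, α i * realChar k i + σ * ∑ i, β i * realChar k i

/-- Two distinct nontrivial sign characters `x`, `y` are both `1` on at most a quarter of the `2N`
elements, and the sum of their eigenvalues is at most twice that count.  The count enters through
`max (x + y) 0 = (x + y) / 2 + (1 + x * y) / 2` and orthogonality. -/
lemma charEig_add_le {N : ℕ} [NeZero N] (α β : ZMod N → ℝ)
    (hα : ∀ i, 0 ≤ α i ∧ α i ≤ 1) (hβ : ∀ i, 0 ≤ β i ∧ β i ≤ 1) {k l : ZMod N} {σ τ : ℝ}
    (hk : k + k = 0) (hl : l + l = 0) (hσ : σ = 1 ∨ σ = -1) (hτ : τ = 1 ∨ τ = -1)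
    (hk1 : ¬ (k = 0 ∧ σ = 1)) (hl1 : ¬ (l = 0 ∧ τ = 1)) (hne : ¬ (k = l ∧ σ = τ)) :
    charEig α β k σ + charEig α β l τ ≤ N := by
  have key : ∀ w x y : ℝ, 0 ≤ w → w ≤ 1 → (x = 1 ∨ x = -1) → (y = 1 ∨ y = -1) →
      w * (x + y) ≤ (x + y) / 2 + (1 + x * y) / 2 := by
    rintro w x y h0 h1 (rfl | rfl) (rfl | rfl) <;> linarith
  have hsign : ∀ {ρ x : ℝ}, (ρ = 1 ∨ ρ = -1) → (x = 1 ∨ x = -1) → (ρ * x = 1 ∨ ρ * x = -1) := by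
    rintro ρ x (rfl | rfl) (rfl | rfl) <;> simp
  have z1 : (1 + σ) * ∑ i, realChar k i = 0 := by
    rw [sum_realChar]
    rcases hσ with rfl | rfl
    · rw [if_neg (by simpa using hk1)]; simp
    · simp
  have z2 : (1 + τ) * ∑ i, realChar l i = 0 := by
    rw [sum_realChar]
    rcases hτ with rfl | rfl
    · rw [if_neg (by simpa using hl1)]; simp
    · simp
  have z3 : (1 + σ * τ) * ∑ i, realChar k i * realChar l i = 0 := by
    by_cases hkl : k = l
    · have : 1 + σ * τ = 0 := by
        rcases hσ with rfl | rfl <;> rcases hτ with rfl | rfl <;> simp_all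
      rw [this, zero_mul]
    · rw [sum_realChar_mul hk hl hkl, mul_zero]
  calc charEig α β k σ + charEig α β l τ
      = ∑ i, (α i * (realChar k i + realChar l i)
          + β i * (σ * realChar k i + τ * realChar l i)) := by
        unfold charEig
        rw [Finset.mul_sum, Finset.mul_sum, ← Finset.sum_add_distrib, ← Finset.sum_add_distrib,
          ← Finset.sum_add_distrib]
        exact Finset.sum_congr rfl fun i _ => by ring
    _ ≤ ∑ i, (1 + (1 + σ) / 2 * realChar k i + (1 + τ) / 2 * realChar l i
          + (1 + σ * τ) / 2 * (realChar k i * realChar l i)) := by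
        refine Finset.sum_le_sum fun i _ => ?_
        have hx := (realChar_cases hk i).2
        have hy := (realChar_cases hl i).2
        have := key (α i) _ _ (hα i).1 (hα i).2 hx hy
        have := key (β i) _ _ (hβ i).1 (hβ i).2 (hsign hσ hx) (hsign hτ hy)
        nlinarith
    _ = N := by
        rw [Finset.sum_add_distrib, Finset.sum_add_distrib, Finset.sum_add_distrib,
          ← Finset.mul_sum, ← Finset.mul_sum, ← Finset.mul_sum]
        simp only [Finset.sum_const, Finset.card_univ, ZMod.card, nsmul_eq_mul, mul_one]
        linarith

/-! ### The quadratic form -/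

/-- The quadratic form of the Cayley matrix, in Fourier coordinates: `f` and `g` are the
restrictions of the vector to rotations and reflections. -/
lemma quadForm_fourier {N : ℕ} [NeZero N] (α β f g : ZMod N → ℝ) :
    N * (∑ i, ∑ j, α (i - j) * (f i * f j + g i * g j) +
      2 * ∑ i, ∑ j, β (i - j) * g i * f j) =
    ∑ k, ((fourierCoeffZ α k).re *
        (Complex.normSq (fourierCoeffZ f k) + Complex.normSq (fourierCoeffZ g k))
      + 2 * (conj (fourierCoeffZ g k) * fourierCoeffZ f k * fourierCoeffZ β k).re) := by
  have h1 := congrArg Complex.re (parseval_conv f f α)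
  have h2 := congrArg Complex.re (parseval_conv g g α)
  have h3 := congrArg Complex.re (parseval_conv g f β)
  rw [Complex.re_sum, ← Complex.ofReal_natCast, ← Complex.ofReal_mul, Complex.ofReal_re]
    at h1 h2 h3
  simp only [← Complex.normSq_eq_conj_mul_self, Complex.re_ofReal_mul] at h1 h2
  have e : ∑ i, ∑ j, α (i - j) * (f i * f j + g i * g j) =
      ∑ i, ∑ j, α (i - j) * f i * f j + ∑ i, ∑ j, α (i - j) * g i * g j := by
    simp only [← Finset.sum_add_distrib]
    exact Finset.sum_congr rfl fun i _ => Finset.sum_congr rfl fun j _ => by ring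
  rw [e, mul_add, mul_add, ← h1, ← h2, mul_left_comm, ← h3, Finset.mul_sum,
    ← Finset.sum_add_distrib, ← Finset.sum_add_distrib]
  exact Finset.sum_congr rfl fun k _ => by ring

/-- If the vector is orthogonal to every sign character whose eigenvalue exceeds `2N/3`, its
quadratic form is at most `2N/3` times its squared norm. -/
lemma quadForm_le {N : ℕ} [NeZero N] (α β f g : ZMod N → ℝ)
    (hα : ∀ i, 0 ≤ α i ∧ α i ≤ 1) (hβ : ∀ i, 0 ≤ β i ∧ β i ≤ 1)
    (hch : ∀ (k : ZMod N) (σ : ℝ), k + k = 0 → (σ = 1 ∨ σ = -1) →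
      charEig α β k σ ≤ 2 * N / 3 ∨
        ∑ i, f i * realChar k i + σ * ∑ i, g i * realChar k i = 0) :
    ∑ i, ∑ j, α (i - j) * (f i * f j + g i * g j) + 2 * ∑ i, ∑ j, β (i - j) * g i * f j ≤
      2 * N / 3 * (∑ i, f i ^ 2 + ∑ i, g i ^ 2) := by
  have hN : (0 : ℝ) < N := Nat.cast_pos.2 (Nat.pos_of_ne_zero (NeZero.ne N))
  refine le_of_mul_le_mul_left ?_ hN
  rw [quadForm_fourier, mul_left_comm, mul_add, ← parseval_sq, ← parseval_sq,
    ← Finset.sum_add_distrib, Finset.mul_sum]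
  refine Finset.sum_le_sum fun k _ => ?_
  by_cases hk : k + k = 0
  · have hsq : ∀ σ : ℝ, (σ = 1 ∨ σ = -1) →
        charEig α β k σ * (∑ i, f i * realChar k i + σ * ∑ i, g i * realChar k i) ^ 2 ≤
        2 * N / 3 * (∑ i, f i * realChar k i + σ * ∑ i, g i * realChar k i) ^ 2 := by
      intro σ hσ
      rcases hch k σ hk hσ with h | h
      · exact mul_le_mul_of_nonneg_right h (sq_nonneg _)
      · rw [h]; simp
    have h1 := hsq 1 (Or.inl rfl)
    have h2 := hsq (-1) (Or.inr rfl)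
    unfold charEig at h1 h2
    simp only [fourierCoeffZ_real hk, Complex.conj_ofReal, ← Complex.ofReal_mul,
      Complex.ofReal_re, Complex.normSq_ofReal]
    nlinarith
  · have hb := two_dim_bound k hk α β hα hβ
    set F := fourierCoeffZ f k
    set G := fourierCoeffZ g k
    set b := fourierCoeffZ β k
    have h1 : (conj G * F * b).re ≤ ‖G‖ * ‖F‖ * ‖b‖ := by
      refine (Complex.re_le_norm _).trans ?_
      rw [norm_mul, norm_mul, Complex.norm_conj]
    rw [Complex.normSq_eq_norm_sq, Complex.normSq_eq_norm_sq]
    have h2 : 2 * (‖G‖ * ‖F‖ * ‖b‖) ≤ ‖b‖ * (‖F‖ ^ 2 + ‖G‖ ^ 2) := by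
      nlinarith [mul_nonneg (norm_nonneg b) (sq_nonneg (‖F‖ - ‖G‖))]
    have h3 := mul_le_mul_of_nonneg_right hb (by positivity : 0 ≤ ‖F‖ ^ 2 + ‖G‖ ^ 2)
    linarith

/-- The eigenvalue bound for any symmetric matrix with the block pattern shared by dihedral and
dicyclic Cayley matrices. -/
lemma lambdaK_block_le {N : ℕ} [NeZero N] {V : Type} [Fintype V] [DecidableEq V]
    (e : ZMod N ⊕ ZMod N ≃ V) (A : Matrix V V ℝ) (hA : A.IsHermitian) (α β : ZMod N → ℝ)
    (hα : ∀ i, 0 ≤ α i ∧ α i ≤ 1) (hβ : ∀ i, 0 ≤ β i ∧ β i ≤ 1)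
    (h11 : ∀ i j, A (e (.inl i)) (e (.inl j)) = α (i - j))
    (h12 : ∀ i j, A (e (.inl i)) (e (.inr j)) = β (j - i))
    (h21 : ∀ i j, A (e (.inr i)) (e (.inl j)) = β (i - j))
    (h22 : ∀ i j, A (e (.inr i)) (e (.inr j)) = α (j - i)) :
    lambdaK A 3 ≤ 2 * N / 3 := by
  let χ : ZMod N → ℝ → V → ℝ := fun k σ v =>
    Sum.elim (fun i => realChar k i) (fun i => σ * realChar k i) (e.symm v)
  have hdot : ∀ u v : V → ℝ, u ⬝ᵥ v =
      ∑ i, u (e (.inl i)) * v (e (.inl i)) + ∑ i, u (e (.inr i)) * v (e (.inr i)) := by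
    intro u v
    rw [dotProduct, ← e.sum_comp, Fintype.sum_sum_type]
  have hχ : ∀ k σ (v : V → ℝ), χ k σ ⬝ᵥ v = 0 →
      ∑ i, v (e (.inl i)) * realChar k i + σ * ∑ i, v (e (.inr i)) * realChar k i = 0 := by
    intro k σ v h
    rw [hdot] at h
    simp only [χ, Equiv.symm_apply_apply, Sum.elim_inl, Sum.elim_inr] at h
    rw [← h, Finset.mul_sum]
    congr 1 <;> exact Finset.sum_congr rfl fun i _ => by ring
  have hquad : ∀ v : V → ℝ, v ⬝ᵥ (A *ᵥ v) =
      ∑ i, ∑ j, α (i - j) * (v (e (.inl i)) * v (e (.inl j)) + v (e (.inr i)) * v (e (.inr j)))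
        + 2 * ∑ i, ∑ j, β (i - j) * v (e (.inr i)) * v (e (.inl j)) := by
    intro v
    have hmv : ∀ x, (A *ᵥ v) x = ∑ j, A x (e (.inl j)) * v (e (.inl j)) +
        ∑ j, A x (e (.inr j)) * v (e (.inr j)) := fun x => hdot (A x) v
    rw [hdot]
    simp only [hmv, h11, h12, h21, h22, mul_add, Finset.mul_sum, Finset.sum_add_distrib, two_mul]
    have s1 : ∑ i, ∑ j, v (e (.inl i)) * (β (j - i) * v (e (.inr j))) =
        ∑ i, ∑ j, β (i - j) * v (e (.inr i)) * v (e (.inl j)) := by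
      rw [Finset.sum_comm]
      exact Finset.sum_congr rfl fun i _ => Finset.sum_congr rfl fun j _ => by ring
    have s2 : ∑ i, ∑ j, v (e (.inr i)) * (α (j - i) * v (e (.inr j))) =
        ∑ i, ∑ j, α (i - j) * (v (e (.inr i)) * v (e (.inr j))) := by
      rw [Finset.sum_comm]
      exact Finset.sum_congr rfl fun i _ => Finset.sum_congr rfl fun j _ => by ring
    have s3 : ∑ i, ∑ j, v (e (.inl i)) * (α (i - j) * v (e (.inl j))) =
        ∑ i, ∑ j, α (i - j) * (v (e (.inl i)) * v (e (.inl j))) :=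
      Finset.sum_congr rfl fun i _ => Finset.sum_congr rfl fun j _ => by ring
    have s4 : ∑ i, ∑ j, v (e (.inr i)) * (β (i - j) * v (e (.inl j))) =
        ∑ i, ∑ j, β (i - j) * v (e (.inr i)) * v (e (.inl j)) :=
      Finset.sum_congr rfl fun i _ => Finset.sum_congr rfl fun j _ => by ring
    rw [s1, s2, s3, s4]
    ring
  have hN : (0 : ℝ) ≤ N := Nat.cast_nonneg N
  -- `(k₀, σ₀)` is the one nontrivial sign character that may have a large eigenvalue.
  obtain ⟨k₀, σ₀, h₀⟩ : ∃ (k₀ : ZMod N) (σ₀ : ℝ), ∀ (k : ZMod N) (σ : ℝ), k + k = 0 →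
      (σ = 1 ∨ σ = -1) → charEig α β k σ ≤ 2 * N / 3 ∨ (k = 0 ∧ σ = 1) ∨ (k = k₀ ∧ σ = σ₀) := by
    by_cases hex : ∃ (k : ZMod N) (σ : ℝ), k + k = 0 ∧ (σ = 1 ∨ σ = -1) ∧ ¬ (k = 0 ∧ σ = 1) ∧
        2 * N / 3 < charEig α β k σ
    · obtain ⟨k₀, σ₀, hk₀, hσ₀, h1, hbig⟩ := hex
      refine ⟨k₀, σ₀, fun k σ hk hσ => ?_⟩
      by_contra! hcon
      obtain ⟨hc, hn1, hn2⟩ := hcon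
      have := charEig_add_le α β hα hβ hk hk₀ hσ hσ₀ (fun h => hn1 h.1 h.2) h1
        (fun h => hn2 h.1 h.2)
      linarith
    · refine ⟨0, 1, fun k σ hk hσ => ?_⟩
      by_contra! hcon
      exact hex ⟨k, σ, hk, hσ, fun h => hcon.2.1 h.1 h.2, hcon.1⟩
  refine lambdaK_three_le_s9 A hA _ (by positivity) (χ 0 1) (χ k₀ σ₀) fun v hv1 hv2 => ?_
  rw [hquad, hdot]
  simp only [← pow_two]
  refine quadForm_le α β (fun i => v (e (.inl i))) (fun i => v (e (.inr i))) hα hβ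
    fun k σ hk hσ => ?_
  rcases h₀ k σ hk hσ with h | ⟨rfl, rfl⟩ | ⟨rfl, rfl⟩
  · exact Or.inl h
  · exact Or.inr (hχ _ _ v hv1)
  · exact Or.inr (hχ _ _ v hv2)

/-! ### Dihedral and dicyclic Cayley graphs -/

lemma cayleyGraph_adj {Γ : Type} [Group Γ] {S : Set Γ} (h1 : (1 : Γ) ∉ S) (hS : S⁻¹ = S)
    (g h : Γ) : (cayleyGraph S).Adj g h ↔ g * h⁻¹ ∈ S := by
  have hsymm : h * g⁻¹ ∈ S ↔ g * h⁻¹ ∈ S := by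
    conv_lhs => rw [← hS]
    simp
  rw [cayleyGraph, SimpleGraph.fromRel_adj, hsymm, or_self, and_iff_right_iff_imp]
  rintro h2 rfl
  exact h1 (by simpa using h2)

/-- The bound for any group split by `e` into rotations and reflections in such a way that
membership of `g * h⁻¹` in `S` follows the dihedral pattern. -/
lemma graphLambda_cayley_le {N : ℕ} [NeZero N] {Γ : Type} [Group Γ] [Fintype Γ] [DecidableEq Γ]
    (S : Set Γ) (h1 : (1 : Γ) ∉ S) (hS : S⁻¹ = S) (e : ZMod N ⊕ ZMod N ≃ Γ)
    (h11 : ∀ i j, e (.inl i) * (e (.inl j))⁻¹ ∈ S ↔ e (.inl (i - j)) ∈ S)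
    (h12 : ∀ i j, e (.inl i) * (e (.inr j))⁻¹ ∈ S ↔ e (.inr (j - i)) ∈ S)
    (h21 : ∀ i j, e (.inr i) * (e (.inl j))⁻¹ ∈ S ↔ e (.inr (i - j)) ∈ S)
    (h22 : ∀ i j, e (.inr i) * (e (.inr j))⁻¹ ∈ S ↔ e (.inl (j - i)) ∈ S) :
    graphLambda (cayleyGraph S) 3 ≤ (Fintype.card Γ : ℝ) / 3 := by
  classical
  have hcard : (Fintype.card Γ : ℝ) = 2 * N := by
    rw [← Fintype.card_congr e, Fintype.card_sum, ZMod.card]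
    push_cast; ring
  rw [hcard]
  unfold graphLambda
  have hbd : ∀ (p : Prop) [Decidable p], (0 : ℝ) ≤ (if p then 1 else 0) ∧
      (if p then (1 : ℝ) else 0) ≤ 1 := by
    intro p _; split_ifs <;> norm_num
  refine lambdaK_block_le e _ (SimpleGraph.isSymm_adjMatrix _)
    (fun i => if e (.inl i) ∈ S then 1 else 0) (fun i => if e (.inr i) ∈ S then 1 else 0)
    (fun i => hbd _) (fun i => hbd _) ?_ ?_ ?_ ?_ <;> intro i j <;>
    simp only [SimpleGraph.adjMatrix_apply, cayleyGraph_adj h1 hS, h11, h12, h21, h22]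

/-- The dicyclic group as the union of its cyclic subgroup and the other coset. -/
def quaternionSumEquiv (m : ℕ) : ZMod (2 * m) ⊕ ZMod (2 * m) ≃ QuaternionGroup m where
  toFun := Sum.elim QuaternionGroup.a QuaternionGroup.xa
  invFun
    | .a i => .inl i
    | .xa i => .inr i
  left_inv := by rintro (i | i) <;> rfl
  right_inv := by rintro (i | i) <;> rfl

lemma quaternion_inv_a {m : ℕ} (i : ZMod (2 * m)) :
    (QuaternionGroup.a i)⁻¹ = QuaternionGroup.a (-i) :=
  inv_eq_of_mul_eq_one_right (by
    rw [QuaternionGroup.a_mul_a, add_neg_cancel, QuaternionGroup.one_def])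

lemma quaternion_inv_xa {m : ℕ} (i : ZMod (2 * m)) :
    (QuaternionGroup.xa i)⁻¹ = QuaternionGroup.xa ((m : ZMod (2 * m)) + i) :=
  rfl

theorem stmt_9 :
    (∀ (m : ℕ) (hm : 2 ≤ m), ∀ S : Set (DihedralGroup m), (1 : DihedralGroup m) ∉ S → S⁻¹ = S →
      haveI : NeZero m := ⟨by omega⟩
      graphLambda (cayleyGraph S) 3 ≤ (Fintype.card (DihedralGroup m) : ℝ) / 3) ∧
    (∀ (m : ℕ) (hm : 1 ≤ m), ∀ S : Set (QuaternionGroup m), (1 : QuaternionGroup m) ∉ S → S⁻¹ = S →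
      haveI : NeZero m := ⟨by omega⟩
      graphLambda (cayleyGraph S) 3 ≤ (Fintype.card (QuaternionGroup m) : ℝ) / 3) := by
  refine ⟨fun m hm S h1 hS => ?_, fun m hm S h1 hS => ?_⟩
  · have : NeZero m := ⟨by omega⟩
    refine graphLambda_cayley_le S h1 hS DihedralGroup.equivSum.symm ?_ ?_ ?_ ?_ <;> intro i j <;>
      simp [DihedralGroup.equivSum, sub_eq_add_neg]
  · have : NeZero m := ⟨by omega⟩
    have h2m : (m : ZMod (2 * m)) + m = 0 := by
      have := ZMod.natCast_self (2 * m)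
      push_cast at this
      rw [← this]; ring
    -- `xa i` and `xa (m + i)` are mutually inverse.
    have hinv : ∀ i : ZMod (2 * m), QuaternionGroup.xa ((m : ZMod (2 * m)) + i) ∈ S ↔
        QuaternionGroup.xa i ∈ S := by
      intro i
      conv_rhs => rw [← hS]
      rw [Set.mem_inv, quaternion_inv_xa]
    refine graphLambda_cayley_le S h1 hS (quaternionSumEquiv m) ?_ ?_ ?_ ?_ <;> intro i j
    · simp [quaternionSumEquiv, quaternion_inv_a, sub_eq_add_neg]
    · simp [quaternionSumEquiv, quaternion_inv_xa, add_sub_assoc, hinv]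
    · simp [quaternionSumEquiv, quaternion_inv_a, sub_eq_add_neg]
    · have : (m : ZMod (2 * m)) + (m + j) - i = j - i := by linear_combination h2m
      simp [quaternionSumEquiv, quaternion_inv_xa, this]
end

section
/- Let G be a finite simple graph on n ≥ 3 vertices whose automorphism group is abelian and acts transitively on the vertex set of G. Then λ₃(G) ≤ n/3. -/
/-!
A transitive abelian permutation group is regular, so after choosing a base vertex `0` the vertex
set becomes an abelian group acting by translations on `G`, i.e. `G` is a Cayley graph. Negation is
then also an automorphism of `G`; since it fixes `0`, regularity forces it to be trivial, so every
element satisfies `a + a = 0` (`exists_elementary_addCommGroup`).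

The eigenvalues of a Cayley graph on a finite abelian group are the sums `∑ c ∈ S, χ c` over the
characters `χ`, with `S` the neighbourhood of `0` (`charpoly_of_translation`). Here the characters
take values `±1`, where `χ₁ + χ₂ ≤ (1 + χ₁) (1 + χ₂) / 2` and the right side is nonnegative. Summing
over the whole group and using orthogonality, two distinct nontrivial characters have eigenvalues
with sum at most `n / 2` (`charSum_add_le`). Hence at most one nontrivial character, and so at most
two characters in all, can have an eigenvalue exceeding `n / 3`.
-/

open Matrix

/-- If at most two eigenvalues, counted with multiplicity, exceed `c`, then `λ₃ ≤ c`. -/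
lemma lambdaK_three_le_s10 {V : Type} [Fintype V] [DecidableEq V] {A : Matrix V V ℝ}
    (hA : A.IsHermitian) (hn : 3 ≤ Fintype.card V) {c : ℝ}
    (h : (((Finset.univ : Finset V).val.map hA.eigenvalues).filter (c < ·)).card ≤ 2) :
    lambdaK A 3 ≤ c := by
  unfold lambdaK eigsDesc
  rw [dif_pos hA]
  set m := (Finset.univ : Finset V).val.map hA.eigenvalues with hm
  have hs : (m.sort (· ≥ ·)).Pairwise (· ≥ ·) := Multiset.pairwise_sort _ _
  have hl : (m.sort (· ≥ ·)).length = Fintype.card V := by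
    rw [Multiset.length_sort, hm, Multiset.card_map]
    rfl
  have he : ((m.sort (· ≥ ·) : List ℝ) : Multiset ℝ) = m := Multiset.sort_eq _ _
  rw [← he] at h
  generalize m.sort (· ≥ ·) = l at *
  match l, hl, hs, h with
  | [], hl, _, _ => simp at hl; omega
  | [_], hl, _, _ => simp at hl; omega
  | [_, _], hl, _, _ => simp at hl; omega
  | x :: y :: z :: t, _, hs, h =>
    by_contra! hc
    have hz : c < z := by simpa using hc
    simp only [List.pairwise_cons, List.mem_cons] at hs
    have hy : c < y := hz.trans_le (hs.2.1 z (by simp))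
    have hx : c < x := hz.trans_le (hs.1 z (by simp))
    simp [hx, hy, hz] at h

/-- A translation-invariant matrix on a finite abelian group is diagonalized by the characters. -/
lemma charpoly_of_translation {α : Type} [AddCommGroup α] [Fintype α] [DecidableEq α]
    (w : α → ℂ) :
    (Matrix.of fun a b : α => w (b - a)).charpoly =
      ∏ χ : AddChar α ℂ, (Polynomial.X - Polynomial.C (∑ c, w c * χ c)) := by
  classical
  have hdiag : LinearMap.toMatrix (AddChar.complexBasis α) (AddChar.complexBasis α)
      (Matrix.toLin' (Matrix.of fun a b : α => w (b - a))) =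
      Matrix.diagonal fun χ : AddChar α ℂ => ∑ c, w c * χ c := by
    ext ψ χ
    have hχ : Matrix.toLin' (Matrix.of fun a b : α => w (b - a)) (χ : α → ℂ) =
        (∑ c, w c * χ c) • AddChar.complexBasis α χ := by
      ext a
      rw [AddChar.complexBasis_apply, Matrix.toLin'_apply, Pi.smul_apply, smul_eq_mul,
        Finset.sum_mul]
      simp only [Matrix.mulVec, dotProduct, Matrix.of_apply]
      refine Fintype.sum_equiv (Equiv.subRight a) _ _ fun b => ?_
      rw [Equiv.subRight_apply, mul_assoc, ← AddChar.map_add_eq_mul, sub_add_cancel]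
    rw [LinearMap.toMatrix_apply, AddChar.complexBasis_apply, hχ, map_smul, Module.Basis.repr_self,
      Matrix.diagonal_apply]
    simp only [Finsupp.smul_apply, smul_eq_mul, Finsupp.single_apply]
    by_cases h : χ = ψ
    · simp [h]
    · simp [h, Ne.symm h]
  rw [← Matrix.charpoly_toLin', ← LinearMap.charpoly_toMatrix _ (AddChar.complexBasis α), hdiag,
    Matrix.charpoly_diagonal]

/-- The eigenvalues of two distinct nontrivial characters of an elementary abelian `2`-group have
sum at most `n / 2`: pointwise `χ₁ + χ₂ ≤ (1 + χ₁) (1 + χ₂) / 2`, and the right side sums to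
`n / 2` over the group. -/
lemma charSum_add_le {α : Type} [AddCommGroup α] [Fintype α] (h2 : ∀ a : α, a + a = 0)
    (p : α → Prop) [DecidablePred p] {χ ψ : AddChar α ℂ} (hχ : χ ≠ 0) (hψ : ψ ≠ 0)
    (hne : χ ≠ ψ) :
    (∑ c, (if p c then (1 : ℂ) else 0) * χ c).re + (∑ c, (if p c then (1 : ℂ) else 0) * ψ c).re ≤
      (Fintype.card α : ℝ) / 2 := by
  have hval : ∀ (θ : AddChar α ℂ) (a : α), θ a = 1 ∨ θ a = -1 := fun θ a => by
    rw [← mul_self_eq_one_iff, ← AddChar.map_add_eq_mul, h2, AddChar.map_zero_eq_one]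
  have hprod : χ + ψ ≠ 0 := fun h => hne <| by
    ext a
    have h1 : χ a * ψ a = 1 := by
      rw [← AddChar.add_apply, h, AddChar.zero_apply]
    rcases hval χ a with h3 | h3 <;> rcases hval ψ a with h4 | h4 <;> rw [h3, h4] at h1 ⊢ <;>
      norm_num at h1
  have hsum : ∑ a, ((1 + χ a) * (1 + ψ a)) = (Fintype.card α : ℂ) := by
    have e : ∀ a, (1 + χ a) * (1 + ψ a) = 1 + χ a + ψ a + (χ + ψ) a := fun a => by
      rw [AddChar.add_apply]; ring
    simp only [e, Finset.sum_add_distrib, AddChar.sum_eq_zero_iff_ne_zero.2 hχ,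
      AddChar.sum_eq_zero_iff_ne_zero.2 hψ, AddChar.sum_eq_zero_iff_ne_zero.2 hprod]
    simp
  have hre : ∑ a, ((1 + χ a) * (1 + ψ a)).re = (Fintype.card α : ℝ) := by
    rw [← Complex.re_sum, hsum, Complex.natCast_re]
  rw [← hre, Complex.re_sum, Complex.re_sum, ← Finset.sum_add_distrib, Finset.sum_div]
  refine Finset.sum_le_sum fun a _ => ?_
  rcases hval χ a with h3 | h3 <;> rcases hval ψ a with h4 | h4 <;> rw [h3, h4] <;>
    by_cases hp : p a <;> simp [hp] <;> norm_num

/-- A graph with abelian vertex-transitive automorphism group is a Cayley graph on an elementary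
abelian `2`-group. -/
lemma exists_elementary_addCommGroup {V : Type} [Nonempty V] (G : SimpleGraph V)
    (habelian : ∀ φ ψ : G ≃g G, φ.trans ψ = ψ.trans φ)
    (htrans : ∀ u v : V, ∃ φ : G ≃g G, φ u = v) :
    ∃ _ : AddCommGroup V, (∀ a : V, a + a = 0) ∧
      ∀ a b : V, G.Adj a b ↔ G.Adj 0 (b - a) := by
  obtain ⟨v₀⟩ := ‹Nonempty V›
  have hcomm : ∀ φ ψ : G ≃g G, φ * ψ = ψ * φ := fun φ ψ => habelian ψ φ
  -- A fixed point of one automorphism is moved around by all the others: the action is free.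
  have hfree : ∀ φ : G ≃g G, φ v₀ = v₀ → φ = 1 := fun φ h => by
    ext v
    obtain ⟨ψ, rfl⟩ := htrans v₀ v
    change (φ * ψ) v₀ = ψ v₀
    rw [hcomm]
    change ψ (φ v₀) = _
    rw [h]
  have hbij : Function.Bijective fun φ : G ≃g G => φ v₀ := by
    refine ⟨fun φ ψ h => ?_, htrans v₀⟩
    have h1 : ψ⁻¹ * φ = 1 := hfree _ <| by
      change ψ.symm (φ v₀) = v₀
      rw [show φ v₀ = ψ v₀ from h, RelIso.symm_apply_apply]
    exact (inv_mul_eq_one.1 h1).symm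
  let e : (G ≃g G) ≃ V := Equiv.ofBijective _ hbij
  have he : ∀ φ, e φ = φ v₀ := fun _ => rfl
  have hadj : ∀ θ φ ψ : G ≃g G, G.Adj (e (θ * φ)) (e (θ * ψ)) ↔ G.Adj (e φ) (e ψ) :=
    fun θ φ ψ => θ.map_rel_iff
  -- Inversion of group elements, read on the vertices, is an automorphism because `S = S⁻¹`.
  let σ : G ≃g G :=
    { toEquiv := (e.symm.trans (Equiv.inv (G ≃g G))).trans e
      map_rel_iff' := fun {a b} => by
        obtain ⟨φ, rfl⟩ := e.surjective a
        obtain ⟨ψ, rfl⟩ := e.surjective b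
        simp only [Equiv.trans_apply, Equiv.symm_apply_apply, Equiv.inv_apply]
        rw [← hadj (φ * ψ), mul_inv_cancel_right, hcomm φ ψ, mul_inv_cancel_right,
          SimpleGraph.adj_comm] }
  have hσe : ∀ φ, σ (e φ) = e φ⁻¹ := fun φ => by
    change e (e.symm (e φ))⁻¹ = _
    rw [Equiv.symm_apply_apply]
  have hσ : σ = 1 := hfree σ <| by
    have := hσe 1
    rwa [inv_one] at this
  have hinv : ∀ φ : G ≃g G, φ * φ = 1 := fun φ => by
    have h1 := hσe φ
    rw [hσ] at h1
    have h2 : φ = φ⁻¹ := e.injective h1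
    exact mul_eq_one_iff_eq_inv.2 h2
  let _ : CommGroup (G ≃g G) := { (inferInstance : Group (G ≃g G)) with mul_comm := hcomm }
  let f : V ≃ Additive (G ≃g G) := e.symm.trans Additive.ofMul
  let _ : AddCommGroup V := f.addCommGroup
  have hadd : ∀ φ ψ : G ≃g G, e φ + e ψ = e (φ * ψ) := fun φ ψ => by
    change e (e.symm (e φ) * e.symm (e ψ)) = _
    simp only [Equiv.symm_apply_apply]
  have hzero : (0 : V) = e 1 := rfl
  refine ⟨inferInstance, fun a => ?_, fun a b => ?_⟩
  · obtain ⟨φ, rfl⟩ := e.surjective a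
    rw [hadd, hinv, hzero]
  · obtain ⟨φ, rfl⟩ := e.surjective a
    obtain ⟨ψ, hψ⟩ := e.surjective (b - e φ)
    have hb : b = e (φ * ψ) := by rw [← hadd, hψ, add_sub_cancel]
    rw [← hψ, hb, hzero, ← hadj φ 1 ψ, mul_one]

theorem stmt_10 {V : Type} [Fintype V] [DecidableEq V] (G : SimpleGraph V)
    (hn : 3 ≤ Fintype.card V)
    (habelian : ∀ φ ψ : G ≃g G, φ.trans ψ = ψ.trans φ)
    (htrans : ∀ u v : V, ∃ φ : G ≃g G, φ u = v) :
    graphLambda G 3 ≤ (Fintype.card V : ℝ) / 3 := by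
  have : Nonempty V := Fintype.card_pos_iff.1 (by omega)
  obtain ⟨_, h2, hcay⟩ := exists_elementary_addCommGroup G habelian htrans
  unfold graphLambda
  let _ := Classical.decRel G.Adj
  change lambdaK (G.adjMatrix ℝ) 3 ≤ _
  have hA : (G.adjMatrix ℝ).IsHermitian := G.isSymm_adjMatrix
  refine lambdaK_three_le_s10 hA hn ?_
  let ev : AddChar V ℂ → ℂ := fun χ => ∑ c, (if G.Adj 0 c then (1 : ℂ) else 0) * χ c
  have hM : (G.adjMatrix ℝ).map (Complex.ofRealHom) =
      Matrix.of fun a b : V => (if G.Adj 0 (b - a) then (1 : ℂ) else 0) := by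
    ext a b
    simp only [Matrix.map_apply, SimpleGraph.adjMatrix_apply, Matrix.of_apply, ← hcay a b]
    split_ifs <;> simp
  -- Both sides are the root multiset of the complex characteristic polynomial.
  have hroots : (Finset.univ : Finset V).val.map (fun i => (hA.eigenvalues i : ℂ)) =
      (Finset.univ : Finset (AddChar V ℂ)).val.map ev := by
    have h1 : _ = ∏ χ, (Polynomial.X - Polynomial.C (ev χ)) :=
      charpoly_of_translation (α := V) fun c => if G.Adj 0 c then (1 : ℂ) else 0
    rw [← hM, Matrix.charpoly_map, hA.charpoly_eq, Polynomial.map_prod] at h1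
    simp only [Polynomial.map_sub, Polynomial.map_X, Polynomial.map_C] at h1
    have h3 := congrArg Polynomial.roots h1
    rw [Polynomial.roots_prod _ _ (by simp [Finset.prod_ne_zero_iff, Polynomial.X_sub_C_ne_zero]),
      Polynomial.roots_prod _ _ (by simp [Finset.prod_ne_zero_iff, Polynomial.X_sub_C_ne_zero])]
      at h3
    simpa [Polynomial.roots_X_sub_C, Multiset.bind_singleton] using h3
  have hre : (Finset.univ : Finset V).val.map hA.eigenvalues =
      (Finset.univ : Finset (AddChar V ℂ)).val.map fun χ => (ev χ).re := by
    have h4 := congrArg (Multiset.map Complex.re) hroots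
    simpa [Multiset.map_map, Function.comp_def] using h4
  rw [hre, Multiset.filter_map, Multiset.card_map]
  change (Finset.univ.filter fun χ : AddChar V ℂ => (Fintype.card V : ℝ) / 3 < (ev χ).re).card ≤ 2
  by_contra! hc
  classical
  -- Discarding the trivial character leaves two distinct characters.
  have h5 : 1 < ((Finset.univ.filter fun χ : AddChar V ℂ =>
      (Fintype.card V : ℝ) / 3 < (ev χ).re).erase 0).card :=
    lt_of_lt_of_le (by omega) Finset.pred_card_le_card_erase
  obtain ⟨χ, hχ, ψ, hψ, hne⟩ := Finset.one_lt_card.1 h5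
  simp only [Finset.mem_erase, Finset.mem_filter, Finset.mem_univ, true_and] at hχ hψ
  have h6 : (ev χ).re + (ev ψ).re ≤ _ := charSum_add_le h2 (G.Adj 0) hχ.1 hψ.1 hne
  have h7 : (0 : ℝ) ≤ Fintype.card V := Nat.cast_nonneg _
  linarith [hχ.2, hψ.2]
end
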